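/- Let (A,b,c) be a balanced realization of a SISO impulse response g(t) = cA^{t−1}b, and suppose the Hankel matrix H(g) is strictly k-positive for some 2 ≤ k ≤ n. Then for every 1 ≤ r ≤ k−1 the balanced truncation (A₁₁, b₁, c₁) of order r has reduced impulse response g_r(t) = c₁A₁₁^{t−1}b₁ of the form g_r(t) = Σ_{i=1}^{r} ρ_i μ_i^{t−1} with ρ₁, …, ρ_r > 0 and 1 > μ₁ > μ₂ > … > μ_r > 0. In particular, the Hankel matrix H(g_r) of the reduced system is totally positive and the reduced system is externally positive, i.e. g_r(t) ≥ 0 for all t ≥ 1. -/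

import Mathlib

open Matrix

/-- The controllability matrix `[b, Ab, …, A^{n-1}b]` of a SISO pair `(A, b)`. -/
noncomputable def ctrbMatrix {n : ℕ} (A : Matrix (Fin n) (Fin n) ℝ) (b : Fin n → ℝ) :
    Matrix (Fin n) (Fin n) ℝ :=
  Matrix.of fun i j => (A ^ (j : ℕ)).mulVec b i

/-- The observability matrix with rows `c, cA, …, cA^{n-1}` of a SISO pair `(c, A)`. -/
noncomputable def obsvMatrix {n : ℕ} (A : Matrix (Fin n) (Fin n) ℝ) (c : Fin n → ℝ) :
    Matrix (Fin n) (Fin n) ℝ :=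
  Matrix.of fun i j => Matrix.vecMul c (A ^ (i : ℕ)) j

/-- `(A, b, c)` is a balanced realization with Hankel singular values `σ`. -/
def IsBalancedRealization {n : ℕ} (A : Matrix (Fin n) (Fin n) ℝ)
    (b c : Fin n → ℝ) (σ : Fin n → ℝ) : Prop :=
  (∀ μ ∈ spectrum ℂ (A.map (Complex.ofReal ·)), ‖μ‖ < 1) ∧
  (ctrbMatrix A b).det ≠ 0 ∧
  (obsvMatrix A c).det ≠ 0 ∧
  (∀ i j : Fin n, i ≤ j → σ j ≤ σ i) ∧ (∀ i, 0 < σ i) ∧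
  A * Matrix.diagonal σ * Aᵀ - Matrix.diagonal σ + Matrix.vecMulVec b b = 0 ∧
  Aᵀ * Matrix.diagonal σ * A - Matrix.diagonal σ + Matrix.vecMulVec c c = 0

/-- The impulse response of the balanced truncation of order `r`, i.e. of the
triple formed by the leading `r × r` block of `A` and the first `r` entries of
`b` and `c`.  Here `t` is indexed from `0`: `truncResponse A b c r h t` is the
value of the reduced impulse response at time `t + 1`. -/
noncomputable def truncResponse {n : ℕ} (A : Matrix (Fin n) (Fin n) ℝ)
    (b c : Fin n → ℝ) (r : ℕ) (h : r ≤ n) : ℕ → ℝ :=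
  fun t => (c ∘ Fin.castLE h) ⬝ᵥ
    ((A.submatrix (Fin.castLE h) (Fin.castLE h)) ^ t).mulVec (b ∘ Fin.castLE h)

/-- The square submatrix of the infinite Hankel matrix `H(g)_{i,j} = g(i+j-1)`
(`i,j ≥ 1`) obtained from rows `ρ` and columns `c` (zero-based indexing of the
sequence: `g t` stands for `g(t+1)`). -/
def hankelSub (g : ℕ → ℝ) {p : ℕ} (ρ c : Fin p → ℕ) : Matrix (Fin p) (Fin p) ℝ :=
  Matrix.of fun i j => g (ρ i + c j)

/-- The infinite Hankel matrix `H(g)` is totally positive. -/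
def HankelTotallyPositive (g : ℕ → ℝ) : Prop :=
  ∀ (p : ℕ) (ρ c : Fin p → ℕ), StrictMono ρ → StrictMono c →
    0 ≤ (hankelSub g ρ c).det

/-- The infinite Hankel matrix `H(g)` is strictly `k`-positive. -/
def HankelStrictlyKPositive (g : ℕ → ℝ) (k : ℕ) : Prop :=
  ∀ p : ℕ, 1 ≤ p → p ≤ k → ∀ ρ c : Fin p → ℕ, StrictMono ρ → StrictMono c →
    0 < (hankelSub g ρ c).det

/-- The product of `p` convergent real series, as a series over `p`-tuples. -/
theorem hasSum_prod_pi {ι : Type*} {p : ℕ} (a : Fin p → ι → ℝ) (s : Fin p → ℝ)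
    (h : ∀ i, HasSum (a i) (s i)) :
    HasSum (fun J : Fin p → ι => ∏ i, a i (J i)) (∏ i, s i) := by
  induction p with
  | zero =>
    simp only [Finset.univ_eq_empty, Finset.prod_empty]
    exact hasSum_unique (fun _ : Fin 0 → ι => (1 : ℝ))
  | succ p ih =>
    have h1 := ih (fun i => a i.succ) (fun i => s i.succ) (fun i => h i.succ)
    generalize hb : (fun J : Fin p → ι => ∏ i, a i.succ (J i)) = b at h1
    have n0 : Summable fun x => ‖a 0 x‖ := (h 0).summable.norm
    have n1 : Summable fun x => ‖b x‖ := h1.summable.norm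
    have h2 := (h 0).mul h1 (summable_mul_of_summable_norm n0 n1)
    subst hb
    let e : ι × (Fin p → ι) ≃ (Fin (p + 1) → ι) := Fin.consEquiv fun _ => ι
    rw [← e.hasSum_iff, Fin.prod_univ_succ]
    refine h2.congr_fun fun x => ?_
    rw [Function.comp_apply, Fin.prod_univ_succ]
    rfl

/-- The determinant of `p` sequences evaluated along a `p`-tuple of indices. -/
noncomputable def tupleDet {ι : Type*} {p : ℕ} (φ : Fin p → ι → ℝ) (J : Fin p → ι) : ℝ :=
  (Matrix.of fun i j => φ i (J j)).det

theorem tupleDet_comp_perm {ι : Type*} {p : ℕ} (φ : Fin p → ι → ℝ) (J : Fin p → ι)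
    (τ : Equiv.Perm (Fin p)) :
    tupleDet φ (J ∘ τ) = (Equiv.Perm.sign τ : ℤ) * tupleDet φ J :=
  Matrix.det_permute' τ (Matrix.of fun i j => φ i (J j))

theorem tupleDet_eq_zero {ι : Type*} {p : ℕ} (φ : Fin p → ι → ℝ) {J : Fin p → ι}
    (hJ : ¬ Function.Injective J) : tupleDet φ J = 0 := by
  simp only [Function.Injective, not_forall] at hJ
  obtain ⟨i, j, hij, hne⟩ := hJ
  exact Matrix.det_zero_of_column_eq hne fun k => by simp [hij]

theorem sign_mul_sign_real {p : ℕ} (τ : Equiv.Perm (Fin p)) :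
    ((Equiv.Perm.sign τ : ℤ) : ℝ) * ((Equiv.Perm.sign τ : ℤ) : ℝ) = 1 := by
  rcases Int.units_eq_one_or (Equiv.Perm.sign τ) with h | h <;> simp [h]

/-- Andréief's identity. -/
theorem hasSum_tupleDet_mul {ι : Type*} {p : ℕ} (φ ψ : Fin p → ι → ℝ)
    (G : Matrix (Fin p) (Fin p) ℝ)
    (h : ∀ i j, HasSum (fun t => φ i t * ψ j t) (G i j)) :
    HasSum (fun J => tupleDet φ J * tupleDet ψ J) (p.factorial * G.det) := by
  have hinner : ∀ τ : Equiv.Perm (Fin p),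
      (∑ τ' : Equiv.Perm (Fin p), ((Equiv.Perm.sign τ : ℤ) : ℝ) *
        (((Equiv.Perm.sign τ' : ℤ) : ℝ) * ∏ k, G (τ k) (τ' k))) = G.det := by
    intro τ
    have h1 : (G.submatrix τ id)ᵀ.det = ((Equiv.Perm.sign τ : ℤ) : ℝ) * G.det := by
      rw [Matrix.det_transpose, Matrix.det_permute]
    rw [Matrix.det_apply'] at h1
    simp only [Matrix.transpose_apply, Matrix.submatrix_apply, id] at h1
    rw [← Finset.mul_sum, h1, ← mul_assoc, sign_mul_sign_real, one_mul]
  have hS : (p.factorial : ℝ) * G.det = ∑ τ : Equiv.Perm (Fin p), ∑ τ' : Equiv.Perm (Fin p),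
      ((Equiv.Perm.sign τ : ℤ) : ℝ) *
        (((Equiv.Perm.sign τ' : ℤ) : ℝ) * ∏ k, G (τ k) (τ' k)) := by
    rw [Finset.sum_congr rfl fun τ _ => hinner τ]
    simp [Fintype.card_perm]
  rw [hS]
  have hE : (fun J : Fin p → ι => tupleDet φ J * tupleDet ψ J) = fun J =>
      ∑ τ : Equiv.Perm (Fin p), ∑ τ' : Equiv.Perm (Fin p),
      ((Equiv.Perm.sign τ : ℤ) : ℝ) *
        (((Equiv.Perm.sign τ' : ℤ) : ℝ) * ∏ k, (φ (τ k) (J k) * ψ (τ' k) (J k))) := by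
    ext J
    rw [tupleDet, tupleDet, Matrix.det_apply', Matrix.det_apply', Finset.sum_mul_sum]
    refine Finset.sum_congr rfl fun τ _ => Finset.sum_congr rfl fun τ' _ => ?_
    simp only [Matrix.of_apply, Finset.prod_mul_distrib]
    ring
  rw [hE]
  exact hasSum_sum fun τ _ => hasSum_sum fun τ' _ =>
    (((hasSum_prod_pi (fun k t => φ (τ k) t * ψ (τ' k) t) _
      fun k => h (τ k) (τ' k)).mul_left _).mul_left _)

/-- The sign of the permutation sorting `J`, and `0` if `J` has repeated entries. -/
noncomputable def orderSign {p : ℕ} (J : Fin p → ℕ) : ℝ :=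
  (SignType.sign (Matrix.vandermonde fun i => (J i : ℝ)).det : ℝ)

theorem orderSign_comp_perm {p : ℕ} (J : Fin p → ℕ) (τ : Equiv.Perm (Fin p)) :
    orderSign (J ∘ τ) = (Equiv.Perm.sign τ : ℤ) * orderSign J := by
  have h : (Matrix.vandermonde fun i => (((J ∘ τ) i : ℕ) : ℝ)).det =
      ((Equiv.Perm.sign τ : ℤ) : ℝ) * (Matrix.vandermonde fun i => (J i : ℝ)).det :=
    Matrix.det_permute τ (Matrix.vandermonde fun i => (J i : ℝ))
  rw [orderSign, orderSign, h, sign_mul]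
  rcases Int.units_eq_one_or (Equiv.Perm.sign τ) with h | h <;> simp [h]

theorem orderSign_of_strictMono {p : ℕ} {J : Fin p → ℕ} (hJ : StrictMono J) :
    orderSign J = 1 := by
  have : 0 < (Matrix.vandermonde fun i => (J i : ℝ)).det := by
    rw [Matrix.det_vandermonde]
    refine Finset.prod_pos fun i _ => Finset.prod_pos fun j hj => ?_
    have : J i < J j := hJ (by simpa using hj)
    simpa using this
  simp [orderSign, sign_pos this]

theorem orderSign_succ {p : ℕ} (J : Fin p → ℕ) :
    orderSign (fun i => J i + 1) = orderSign J := by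
  simp only [orderSign, Nat.cast_add, Nat.cast_one]
  rw [Matrix.det_vandermonde_add (fun i => (J i : ℝ)) 1]

theorem exists_perm_strictMono {α : Type*} [LinearOrder α] {p : ℕ} {J : Fin p → α}
    (hJ : Function.Injective J) : ∃ τ : Equiv.Perm (Fin p), StrictMono (J ∘ τ) :=
  ⟨Tuple.sort J, (Tuple.monotone_sort J).strictMono_of_injective
    (hJ.comp (Tuple.sort J).injective)⟩

theorem orderSign_mul_self {p : ℕ} {J : Fin p → ℕ} (hJ : Function.Injective J) :
    orderSign J * orderSign J = 1 := by
  obtain ⟨τ, hτ⟩ := exists_perm_strictMono hJ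
  have h := orderSign_comp_perm J τ
  rw [orderSign_of_strictMono hτ] at h
  rcases Int.units_eq_one_or (Equiv.Perm.sign τ) with h' | h'
  · simp [h'] at h; simp [← h]
  · have : orderSign J = -1 := by simp [h'] at h; linarith
    simp [this]

/-- A determinant with positive values on increasing tuples has the sign of the ordering. -/
theorem orderSign_mul_hankelSub_det_pos {g : ℕ → ℝ} {k p : ℕ} (hg : HankelStrictlyKPositive g k)
    (hp : 1 ≤ p) (hpk : p ≤ k) {J L : Fin p → ℕ} (hJ : Function.Injective J)
    (hL : Function.Injective L) :
    0 < orderSign J * orderSign L * (hankelSub g J L).det := by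
  obtain ⟨τ, hτ⟩ := exists_perm_strictMono hJ
  obtain ⟨υ, hυ⟩ := exists_perm_strictMono hL
  have h := hg p hp hpk _ _ hτ hυ
  have h1 : (hankelSub g (J ∘ τ) (L ∘ υ)).det = ((Equiv.Perm.sign τ : ℤ) : ℝ) *
      (((Equiv.Perm.sign υ : ℤ) : ℝ) * (hankelSub g J L).det) := by
    rw [← Matrix.det_permute' υ, ← Matrix.det_permute τ]
    rfl
  have h2 := orderSign_comp_perm J τ
  have h3 := orderSign_comp_perm L υ
  rw [orderSign_of_strictMono hτ] at h2
  rw [orderSign_of_strictMono hυ] at h3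
  have h4 := sign_mul_sign_real τ
  have h5 := sign_mul_sign_real υ
  have e2 : orderSign J = ((Equiv.Perm.sign τ : ℤ) : ℝ) := by
    linear_combination (-((Equiv.Perm.sign τ : ℤ) : ℝ)) * h2 - orderSign J * h4
  have e3 : orderSign L = ((Equiv.Perm.sign υ : ℤ) : ℝ) := by
    linear_combination (-((Equiv.Perm.sign υ : ℤ) : ℝ)) * h3 - orderSign L * h5
  rw [e2, e3, mul_assoc, ← h1]
  exact h

open Polynomial in
theorem signVariations_lt_card_support {P : ℝ[X]} (hP : P ≠ 0) :
    P.signVariations < P.support.card := by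
  induction h : P.support.card generalizing P with
  | zero => simp [hP] at h
  | succ m ih =>
    rcases eq_or_ne P.eraseLead 0 with h0 | h0
    · have : P = Polynomial.monomial P.natDegree P.leadingCoeff := by
        conv_lhs => rw [← P.eraseLead_add_monomial_natDegree_leadingCoeff, h0, zero_add]
      rw [this, Polynomial.signVariations_monomial]
      exact Nat.succ_pos m
    · have := ih h0 (Polynomial.card_support_eraseLead' h)
      have := P.signVariations_le_eraseLead_succ
      omega

open Polynomial in
/-- A nonzero real polynomial has fewer distinct positive roots than monomials. -/
theorem card_positive_roots_lt {P : ℝ[X]} (hP : P ≠ 0) (S : Finset ℝ)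
    (hS : ∀ x ∈ S, 0 < x ∧ P.eval x = 0) : S.card < P.support.card := by
  refine lt_of_le_of_lt ?_ (signVariations_lt_card_support hP)
  refine le_trans ?_ P.roots_countP_pos_le_signVariations
  rw [Multiset.countP_eq_card_filter]
  refine Multiset.card_le_card ((Multiset.le_iff_subset S.nodup).2 fun x hx => ?_)
  rw [Multiset.mem_filter, Polynomial.mem_roots hP]
  exact ⟨(hS x hx).2, (hS x hx).1⟩

open Polynomial in
/-- Generalized Vandermonde determinants with positive increasing nodes and increasing exponents
are positive. -/
theorem det_generalized_vandermonde_pos {p : ℕ} (x : Fin p → ℝ) (e : Fin p → ℕ)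
    (hx : StrictMono x) (hx0 : ∀ i, 0 < x i) (he : StrictMono e) :
    0 < (Matrix.of fun i j => x i ^ e j).det := by
  induction p with
  | zero => simp
  | succ p ih =>
    let c : Fin (p + 1) → ℝ := fun j => (-1) ^ (p + (j : ℕ)) *
      (Matrix.of fun (i : Fin p) (l : Fin p) => x i.castSucc ^ e (j.succAbove l)).det
    have hc : 0 < c (Fin.last p) := by
      have := ih (fun i => x i.castSucc) (fun i => e i.castSucc)
        (hx.comp Fin.strictMono_castSucc) (fun i => hx0 _) (he.comp Fin.strictMono_castSucc)
      simpa [c, ← two_mul] using this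
    let P : ℝ[X] := ∑ j, Polynomial.monomial (e j) (c j)
    have hlap : ∀ y : ℝ, P.eval y =
        (Matrix.of fun i j => (Fin.snoc (fun i => x (Fin.castSucc i)) y : Fin (p + 1) → ℝ) i
          ^ e j).det := by
      intro y
      rw [Matrix.det_succ_row _ (Fin.last p), Polynomial.eval_finsetSum]
      refine Finset.sum_congr rfl fun j _ => ?_
      simp only [Polynomial.eval_monomial, c, Matrix.of_apply, Fin.snoc_last, Fin.val_last]
      rw [mul_right_comm]
      congr 2
      ext i l
      simp [Fin.succAbove_last]
    have hcoeff : ∀ d, P.coeff d = ∑ j, if e j = d then c j else 0 := by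
      intro d
      simp [P, Polynomial.finsetSum_coeff, Polynomial.coeff_monomial]
    have hlead : P.coeff (e (Fin.last p)) = c (Fin.last p) := by
      rw [hcoeff, Finset.sum_eq_single (Fin.last p)]
      · simp
      · intro j _ hj
        rw [if_neg fun h => hj (he.injective h)]
      · simp
    have hP : P ≠ 0 := by
      intro h
      rw [h, Polynomial.coeff_zero] at hlead
      exact hc.ne hlead
    have hsupp : P.support ⊆ Finset.univ.image e := by
      intro d hd
      rw [Polynomial.mem_support_iff, hcoeff] at hd
      obtain ⟨j, _, hj⟩ := Finset.exists_ne_zero_of_sum_ne_zero hd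
      simp only [Finset.mem_image, Finset.mem_univ, true_and]
      exact ⟨j, by by_contra h; simp [h] at hj⟩
    have hcard : P.support.card ≤ p + 1 :=
      (Finset.card_le_card hsupp).trans (Finset.card_image_le.trans (by simp))
    have hnode : ∀ i : Fin p, P.eval (x i.castSucc) = 0 := by
      intro i
      rw [hlap]
      refine Matrix.det_zero_of_row_eq (i := i.castSucc) (j := Fin.last p)
        (Fin.castSucc_lt_last i).ne ?_
      ext j
      simp
    have hno : ∀ y, x (Fin.last p) ≤ y → P.eval y ≠ 0 := by
      intro y hy h0
      have hlt : ∀ i : Fin p, x i.castSucc < y := fun i =>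
        (hx (Fin.castSucc_lt_last i)).trans_le hy
      have hnot : y ∉ Finset.univ.image fun i : Fin p => x i.castSucc := by
        simp only [Finset.mem_image, Finset.mem_univ, true_and, not_exists]
        exact fun i => (hlt i).ne
      have := card_positive_roots_lt hP (insert y (Finset.univ.image fun i : Fin p =>
        x i.castSucc)) (by
          intro z hz
          rw [Finset.mem_insert] at hz
          rcases hz with rfl | hz
          · exact ⟨(hx0 _).trans_le hy, h0⟩
          · obtain ⟨i, -, rfl⟩ := Finset.mem_image.1 hz
            exact ⟨hx0 _, hnode i⟩)
      rw [Finset.card_insert_of_notMem hnot, Finset.card_image_of_injective _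
        (show Function.Injective fun i : Fin p => x i.castSucc from
          hx.injective.comp (Fin.castSucc_injective p)), Finset.card_fin] at this
      omega
    have hdeg : P.natDegree = e (Fin.last p) := by
      refine le_antisymm ?_ (Polynomial.le_natDegree_of_ne_zero (hlead ▸ hc.ne'))
      rw [Polynomial.natDegree_le_iff_coeff_eq_zero]
      intro d hd
      rw [hcoeff]
      refine Finset.sum_eq_zero fun j _ => if_neg fun h => ?_
      have := he.monotone (Fin.le_last j)
      omega
    have hpos : 0 < P.eval (x (Fin.last p)) := by
      by_contra hneg
      have hneg := lt_of_le_of_ne (not_lt.1 hneg) (hno _ le_rfl)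
      have hdeg0 : 0 < P.degree := by
        rw [← Polynomial.natDegree_pos_iff_degree_pos]
        by_contra h
        have hC := Polynomial.eq_C_of_natDegree_eq_zero (Nat.eq_zero_of_not_pos h)
        have : P.eval (x (Fin.last p)) = c (Fin.last p) := by
          rw [← hlead, ← hdeg, Nat.eq_zero_of_not_pos h]
          conv_lhs => rw [hC]
          simp
        linarith
      have htop := P.tendsto_atTop_of_leadingCoeff_nonneg hdeg0
        (by rw [Polynomial.leadingCoeff, hdeg, hlead]; exact hc.le)
      obtain ⟨y, hy1, hy2⟩ := ((htop.eventually_ge_atTop 0).and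
        (Filter.eventually_ge_atTop (x (Fin.last p)))).exists
      obtain ⟨z, hz, hz0⟩ := intermediate_value_Icc hy2 P.continuous.continuousOn
        (⟨hneg.le, hy1⟩ : (0 : ℝ) ∈ Set.Icc _ _)
      exact hno z hz.1 hz0
    rw [hlap] at hpos
    convert! hpos using 4 with i j
    refine Fin.lastCases ?_ (fun i => ?_) i <;> simp

/-- A positive combination of geometric sequences with positive distinct ratios has a totally
positive Hankel matrix. -/
theorem hankelTotallyPositive_of_exponential_sum {r : ℕ} {ρ μ : Fin r → ℝ} {g : ℕ → ℝ}
    (hρ : ∀ i, 0 < ρ i) (hμ : ∀ i, 0 < μ i)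
    (hg : ∀ t, g t = ∑ i, ρ i * μ i ^ t) : HankelTotallyPositive g := by
  intro p a b ha hb
  have h := hasSum_tupleDet_mul (fun i m => ρ m * μ m ^ a i) (fun j m => μ m ^ b j)
    (hankelSub g a b) (fun i j => by
      have h0 := hasSum_fintype fun m => ρ m * μ m ^ a i * μ m ^ b j
      convert! h0 using 1
      rw [hankelSub, Matrix.of_apply, hg]
      exact Finset.sum_congr rfl fun m _ => by rw [pow_add, mul_assoc])
  have hfac : (0 : ℝ) < p.factorial := by exact_mod_cast p.factorial_pos
  refine nonneg_of_mul_nonneg_right (h.nonneg fun m => ?_) hfac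
  have hscale : tupleDet (fun i m => ρ m * μ m ^ a i) m =
      (∏ j, ρ (m j)) * tupleDet (fun i m => μ m ^ a i) m :=
    Matrix.det_mul_row (fun j => ρ (m j)) (Matrix.of fun i j => μ (m j) ^ a i)
  rw [hscale, mul_assoc]
  refine mul_nonneg (Finset.prod_nonneg fun j _ => (hρ _).le) ?_
  by_cases hinj : Function.Injective (μ ∘ m)
  · obtain ⟨τ, hτ⟩ := exists_perm_strictMono hinj
    have key : ∀ e : Fin p → ℕ, StrictMono e → 0 < tupleDet (fun i m => μ m ^ e i) (m ∘ τ) := by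
      intro e he
      have := det_generalized_vandermonde_pos _ e hτ (fun i => hμ _) he
      rw [← Matrix.det_transpose] at this
      exact this
    have h1 := key a ha
    have h2 := key b hb
    rw [tupleDet_comp_perm] at h1 h2
    have h3 := mul_pos h1 h2
    have h4 := sign_mul_sign_real τ
    have h5 : ∀ s u v : ℝ, s * s = 1 → 0 < s * u * (s * v) → 0 ≤ u * v := by
      intro s u v hs h
      have : s * u * (s * v) = (s * s) * (u * v) := by ring
      rw [this, hs, one_mul] at h
      exact h.le
    exact h5 _ _ _ h4 h3
  · simp only [Function.Injective, not_forall] at hinj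
    obtain ⟨i, j, hij, hne⟩ := hinj
    have : tupleDet (fun i m => μ m ^ a i) m = 0 :=
      Matrix.det_zero_of_column_eq hne fun k => by
        simp only [Function.comp_apply] at hij
        simp [hij]
    rw [this, zero_mul]

/-- Sylvester's criterion, sufficiency: a real symmetric matrix with positive leading principal
minors is positive definite. -/
theorem posDef_of_leading_minors_pos {r : ℕ} (M : Matrix (Fin r) (Fin r) ℝ) (hM : M.IsSymm)
    (h : ∀ (p : ℕ) (hp : p ≤ r), 0 < (M.submatrix (Fin.castLE hp) (Fin.castLE hp)).det) :
    M.PosDef := by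
  induction r with
  | zero => exact Matrix.PosDef.of_dotProduct_mulVec_pos (Subsingleton.elim _ _)
              fun x hx => (hx (Subsingleton.elim _ _)).elim
  | succ r ih =>
    let N := M.submatrix (Fin.castSucc) (Fin.castSucc)
    have hN : N.PosDef := ih N (hM.submatrix _) fun p hp => h p (hp.trans (Nat.le_succ r))
    let F := M.submatrix (finSumFinEquiv : Fin r ⊕ Fin 1 ≃ Fin (r + 1)) finSumFinEquiv
    have hFdet : 0 < F.det := by
      rw [Matrix.det_submatrix_equiv_self]
      simpa using h (r + 1) le_rfl
    have hFsymm : Fᵀ = F := hM.submatrix _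
    have hF : F = Matrix.fromBlocks N F.toBlocks₁₂ F.toBlocks₁₂ᴴ F.toBlocks₂₂ := by
      conv_lhs => rw [← Matrix.fromBlocks_toBlocks F]
      rw [Matrix.fromBlocks_inj]
      refine ⟨rfl, rfl, ?_, rfl⟩
      ext i j
      simp only [Matrix.conjTranspose_apply, star_trivial]
      exact congr_fun (congr_fun hFsymm.symm (Sum.inr i)) (Sum.inl j)
    have : Invertible N := hN.isUnit.invertible
    have hdet := Matrix.det_fromBlocks₁₁ N F.toBlocks₁₂ F.toBlocks₁₂ᴴ F.toBlocks₂₂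
    rw [← hF, Matrix.invOf_eq_nonsing_inv] at hdet
    set T := F.toBlocks₂₂ - F.toBlocks₁₂ᴴ * N⁻¹ * F.toBlocks₁₂ with hT
    have hTdet : 0 < T.det := by
      rw [hdet] at hFdet
      exact pos_of_mul_pos_right hFdet hN.det_pos.le
    have hTpsd : T.PosSemidef := by
      have : T = Matrix.diagonal fun _ => T 0 0 := by
        ext i j
        fin_cases i
        fin_cases j
        simp
      rw [Matrix.det_fin_one] at hTdet
      rw [this]
      exact Matrix.PosSemidef.diagonal fun _ => hTdet.le
    have hFpsd : F.PosSemidef := by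
      rw [hF]
      exact (Matrix.PosDef.fromBlocks₁₁ _ _ hN).2 hTpsd
    have hFpd := hFpsd.posDef_iff_det_ne_zero.2 hFdet.ne'
    have := hFpd.submatrix (finSumFinEquiv.symm.injective)
    simpa [F, Matrix.submatrix_submatrix] using this

/-- The powers of a Schur stable real matrix tend to zero entrywise. -/
theorem tendsto_pow_apply_zero_of_schur {n : ℕ} (A : Matrix (Fin n) (Fin n) ℝ)
    (hA : ∀ μ ∈ spectrum ℂ (A.map (Complex.ofReal ·)), ‖μ‖ < 1) (i j : Fin n) :
    Filter.Tendsto (fun t : ℕ => (A ^ t) i j) Filter.atTop (nhds 0) := by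
  let _ := Matrix.linftyOpNormedRing (n := Fin n) (α := ℂ)
  let _ := Matrix.linftyOpNormedAlgebra (n := Fin n) (R := ℂ) (α := ℂ)
  have : Nonempty (Fin n) := ⟨i⟩
  let B := A.map (Complex.ofReal ·)
  have hr : spectralRadius ℂ B < (1 : NNReal) := spectrum.spectralRadius_lt_of_forall_lt B
    fun z hz => by exact_mod_cast hA z hz
  obtain ⟨q, hq1, hq2⟩ := exists_between hr
  have hG := spectrum.pow_nnnorm_pow_one_div_tendsto_nhds_spectralRadius B
  have hev := (hG.eventually_lt_const hq1).and (Filter.eventually_ge_atTop 1)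
  have hlim : Filter.Tendsto (fun t : ℕ => q ^ t) Filter.atTop (nhds 0) :=
    ENNReal.tendsto_pow_atTop_nhds_zero_of_lt_one (by simpa using hq2)
  have hB : Filter.Tendsto (fun t : ℕ => (‖B ^ t‖₊ : ENNReal)) Filter.atTop (nhds 0) := by
    refine tendsto_of_tendsto_of_tendsto_of_le_of_le' tendsto_const_nhds hlim
      (Filter.Eventually.of_forall fun _ => zero_le) ?_
    filter_upwards [hev] with t ht
    have h1 := ENNReal.rpow_le_rpow ht.1.le (Nat.cast_nonneg (α := ℝ) t)
    rwa [← ENNReal.rpow_mul, one_div, inv_mul_cancel₀ (by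
      have := ht.2
      positivity), ENNReal.rpow_one, ENNReal.rpow_natCast] at h1
  have hB' : Filter.Tendsto (fun t : ℕ => ‖B ^ t‖) Filter.atTop (nhds 0) := by
    have := (ENNReal.tendsto_toReal ENNReal.zero_ne_top).comp hB
    simpa [Function.comp_def] using this
  have hle : ∀ M : Matrix (Fin n) (Fin n) ℂ, ‖M i j‖ ≤ ‖M‖ := by
    intro M
    have h1 : ‖M i j‖₊ ≤ ∑ l, ‖M i l‖₊ :=
      Finset.single_le_sum (f := fun l => ‖M i l‖₊) (fun _ _ => zero_le) (Finset.mem_univ j)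
    have h2 : ∑ l, ‖M i l‖₊ ≤ ‖M‖₊ := by
      rw [Matrix.linfty_opNNNorm_def]
      exact Finset.le_sup (f := fun l => ∑ m, ‖M l m‖₊) (Finset.mem_univ i)
    exact_mod_cast h1.trans h2
  have hentry : Filter.Tendsto (fun t : ℕ => (B ^ t) i j) Filter.atTop (nhds 0) :=
    squeeze_zero_norm (fun t => hle _) hB'
  have hmap : ∀ t : ℕ, (B ^ t) i j = (((A ^ t) i j : ℝ) : ℂ) := by
    intro t
    have := congr_fun (congr_fun (map_pow (Complex.ofRealHom.mapMatrix (m := Fin n)) A t) i) j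
    exact this.symm
  have h0 := (Complex.continuous_re.tendsto 0).comp hentry
  simpa [Function.comp_def, hmap] using h0

/-- A singular value decomposition of finite rank of the Hankel matrix of `g`. -/
structure IsHankelSVD {n : ℕ} (g : ℕ → ℝ) (V U : Fin n → ℕ → ℝ) (σ : Fin n → ℝ) : Prop where
  left_orthonormal : ∀ i j, HasSum (fun t => V i t * V j t) (if i = j then 1 else 0)
  right_orthonormal : ∀ i j, HasSum (fun t => U i t * U j t) (if i = j then 1 else 0)
  decomp : ∀ t s, g (t + s) = ∑ i, σ i * V i t * U i s
  pos : ∀ i, 0 < σ i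
  antitone : ∀ i j, i ≤ j → σ j ≤ σ i

/-- A square summable family as an element of `ℓ²`. -/
noncomputable def toEll2 {ι : Type*} (f : ι → ℝ) (hf : Summable fun J => f J * f J) :
    lp (fun _ : ι => ℝ) 2 :=
  ⟨f, memℓp_gen (by simpa [sq] using hf)⟩

theorem toEll2_apply {ι : Type*} (f : ι → ℝ) (hf : Summable fun J => f J * f J) (J : ι) :
    toEll2 f hf J = f J := rfl

theorem hasSum_ell2_inner {ι : Type*} (f h : lp (fun _ : ι => ℝ) 2) :
    HasSum (fun J => f J * h J) (inner ℝ f h) := by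
  refine (lp.hasSum_inner f h).congr_fun fun J => ?_
  simp [mul_comm]

theorem hasSum_tensor {n p : ℕ} {V : Fin n → ℕ → ℝ}
    (hV : ∀ i j, HasSum (fun t => V i t * V j t) (if i = j then 1 else 0))
    (m m' : Fin p → Fin n) :
    HasSum (fun J : Fin p → ℕ => (∏ i, V (m i) (J i)) * ∏ i, V (m' i) (J i))
      (if m = m' then 1 else 0) := by
  have h := hasSum_prod_pi (fun i t => V (m i) t * V (m' i) t) _ fun i => hV (m i) (m' i)
  convert! h using 1
  · ext J
    rw [Finset.prod_mul_distrib]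
  · rw [Finset.prod_ite_zero]
    simp [funext_iff]

/-- The elementary tensors built from an orthonormal family of sequences. -/
noncomputable def tensorEll2 {n p : ℕ} (V : Fin n → ℕ → ℝ)
    (hV : ∀ i j, HasSum (fun t => V i t * V j t) (if i = j then 1 else 0))
    (m : Fin p → Fin n) : lp (fun _ : Fin p → ℕ => ℝ) 2 :=
  toEll2 (fun J => ∏ i, V (m i) (J i)) (hasSum_tensor hV m m).summable

theorem orthonormal_tensorEll2 {n p : ℕ} (V : Fin n → ℕ → ℝ)
    (hV : ∀ i j, HasSum (fun t => V i t * V j t) (if i = j then 1 else 0)) :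
    Orthonormal ℝ (tensorEll2 (p := p) V hV) := by
  classical
  rw [orthonormal_iff_ite]
  intro m m'
  exact (hasSum_ell2_inner _ _).unique (by
    convert! hasSum_tensor hV m m')

theorem hasSum_comp_perm {p : ℕ} {f : (Fin p → ℕ) → ℝ} {s : ℝ} (hf : HasSum f s)
    (τ : Equiv.Perm (Fin p)) : HasSum (fun J => f (J ∘ τ)) s :=
  (Equiv.hasSum_iff (Equiv.arrowCongr τ.symm (Equiv.refl ℕ))).2 hf

/-- Antisymmetric sequences are orthogonal to tensors with a repeated factor. -/
theorem inner_tensorEll2_eq_zero {n p : ℕ} (V : Fin n → ℕ → ℝ)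
    (hV : ∀ i j, HasSum (fun t => V i t * V j t) (if i = j then 1 else 0))
    {m : Fin p → Fin n} (hm : ¬ Function.Injective m) (h : lp (fun _ : Fin p → ℕ => ℝ) 2)
    (hanti : ∀ (τ : Equiv.Perm (Fin p)) J, h (J ∘ τ) = (Equiv.Perm.sign τ : ℤ) * h J) :
    inner ℝ (tensorEll2 V hV m) h = 0 := by
  simp only [Function.Injective, not_forall] at hm
  obtain ⟨a, b, hab, hne⟩ := hm
  have h1 := hasSum_ell2_inner (tensorEll2 V hV m) h
  have h2 := hasSum_comp_perm h1 (Equiv.swap a b)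
  have hm' : ∀ i, m (Equiv.swap a b i) = m i := by
    intro i
    rcases eq_or_ne i a with rfl | hia
    · rw [Equiv.swap_apply_left, hab]
    · rcases eq_or_ne i b with rfl | hib
      · rw [Equiv.swap_apply_right, hab]
      · rw [Equiv.swap_apply_of_ne_of_ne hia hib]
  have h3 : ∀ J : Fin p → ℕ, tensorEll2 V hV m (J ∘ Equiv.swap a b) = tensorEll2 V hV m J := by
    intro J
    simp only [tensorEll2, toEll2_apply, Function.comp_apply]
    rw [← Equiv.prod_comp (Equiv.swap a b)]
    simp [hm']
  have h4 := (h1.neg).unique (h2.congr_fun fun J => by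
    rw [h3, hanti, Equiv.Perm.sign_swap hne]
    simp)
  linarith

/-- The compound Hankel operator is bounded by the largest product of `p` singular values. -/
theorem compound_hankel_bound {n p : ℕ} {g : ℕ → ℝ} {V U : Fin n → ℕ → ℝ} {σ : Fin n → ℝ}
    (hs : IsHankelSVD g V U σ) {S : ℝ}
    (hS : ∀ m : Fin p → Fin n, Function.Injective m → ∏ i, σ (m i) ≤ S)
    (h : lp (fun _ : Fin p → ℕ => ℝ) 2)
    (hanti : ∀ (τ : Equiv.Perm (Fin p)) J, h (J ∘ τ) = (Equiv.Perm.sign τ : ℤ) * h J) :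
    ∃ F : lp (fun _ : Fin p → ℕ => ℝ) 2,
      (∀ J, HasSum (fun L => (hankelSub g J L).det * h L) (p.factorial * F J)) ∧
      inner ℝ F F ≤ S ^ 2 * inner ℝ h h := by
  classical
  let v := tensorEll2 (p := p) V hs.left_orthonormal
  let u := tensorEll2 (p := p) U hs.right_orthonormal
  have hv : Orthonormal ℝ v := orthonormal_tensorEll2 V hs.left_orthonormal
  have hu : Orthonormal ℝ u := orthonormal_tensorEll2 U hs.right_orthonormal
  let F : lp (fun _ : Fin p → ℕ => ℝ) 2 := ∑ m, ((∏ i, σ (m i)) * inner ℝ (u m) h) • v m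
  refine ⟨F, fun J => ?_, ?_⟩
  · have hF : F J = ∑ m, ((∏ i, σ (m i)) * inner ℝ (u m) h) * v m J := by
      simp only [F, lp.coeFn_sum, Finset.sum_apply, lp.coeFn_smul, Pi.smul_apply, smul_eq_mul]
    have hG : HasSum (fun L => (∏ i, g (J i + L i)) * h L) (F J) := by
      rw [hF]
      have h1 : HasSum (fun L => ∑ m, ((∏ i, σ (m i)) * (u m L * h L)) * v m J)
          (∑ m, ((∏ i, σ (m i)) * inner ℝ (u m) h) * v m J) :=
        hasSum_sum fun m _ => (((hasSum_ell2_inner (u m) h).mul_left _).mul_right _)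
      refine h1.congr_fun fun L => ?_
      simp_rw [hs.decomp]
      rw [Finset.prod_univ_sum, Fintype.piFinset_univ, Finset.sum_mul]
      refine Finset.sum_congr rfl fun m _ => ?_
      simp only [v, u, tensorEll2, toEll2_apply, Finset.prod_mul_distrib]
      ring
    have h2 : HasSum (fun L => ∑ τ : Equiv.Perm (Fin p),
        (∏ i, g (J i + (L ∘ τ) i)) * h (L ∘ τ)) (∑ _τ : Equiv.Perm (Fin p), F J) :=
      hasSum_sum fun τ _ => hasSum_comp_perm hG τ
    rw [Finset.sum_const, Finset.card_univ, Fintype.card_perm, Fintype.card_fin,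
      nsmul_eq_mul] at h2
    refine h2.congr_fun fun L => ?_
    rw [← Matrix.det_transpose, Matrix.det_apply', Finset.sum_mul]
    refine Finset.sum_congr rfl fun τ _ => ?_
    rw [hanti]
    simp only [Matrix.transpose_apply, hankelSub, Matrix.of_apply, Function.comp_apply]
    ring
  · have h1 : inner ℝ F F = ∑ m, ((∏ i, σ (m i)) * inner ℝ (u m) h) ^ 2 := by
      simp only [F, hv.inner_sum, sq]
      simp
    have h2 : ∑ m, ‖inner ℝ (u m) h‖ ^ 2 ≤ ‖h‖ ^ 2 := hu.sum_inner_products_le h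
    rw [h1, real_inner_self_eq_norm_sq]
    refine le_trans ?_ (mul_le_mul_of_nonneg_left h2 (sq_nonneg S))
    rw [Finset.mul_sum]
    refine Finset.sum_le_sum fun m _ => ?_
    by_cases hm : Function.Injective m
    · rw [mul_pow, Real.norm_eq_abs, sq_abs]
      refine mul_le_mul_of_nonneg_right ?_ (sq_nonneg _)
      exact pow_le_pow_left₀ (Finset.prod_nonneg fun i _ => (hs.pos _).le) (hS m hm) 2
    · have : inner ℝ (u m) h = 0 := inner_tensorEll2_eq_zero U _ hm h hanti
      simp [this]

theorem hasSum_tupleDet_mul_self {n p : ℕ} {V : Fin n → ℕ → ℝ}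
    (hV : ∀ i j, HasSum (fun t => V i t * V j t) (if i = j then 1 else 0))
    {m : Fin p → Fin n} (hm : Function.Injective m) :
    HasSum (fun J => tupleDet (fun i => V (m i)) J * tupleDet (fun i => V (m i)) J)
      p.factorial := by
  have h := hasSum_tupleDet_mul (fun i => V (m i)) (fun i => V (m i)) 1 (fun i j => by
    convert! hV (m i) (m j) using 1
    simp [Matrix.one_apply, hm.eq_iff])
  simpa using h

theorem hasSum_hankelSub_mul_tupleDet {n p : ℕ} {g : ℕ → ℝ} {V U : Fin n → ℕ → ℝ}
    {σ : Fin n → ℝ} (hs : IsHankelSVD g V U σ) (m : Fin p → Fin n) (J : Fin p → ℕ) :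
    HasSum (fun L => (hankelSub g J L).det * tupleDet (fun i => U (m i)) L)
      (p.factorial * ((∏ i, σ (m i)) * tupleDet (fun i => V (m i)) J)) := by
  have h := hasSum_tupleDet_mul (fun i t => g (J i + t)) (fun j => U (m j))
    (Matrix.of fun i j => σ (m j) * V (m j) (J i)) (fun i j => by
      have h1 : HasSum (fun t => ∑ l, σ l * V l (J i) * (U l t * U (m j) t))
          (∑ l, σ l * V l (J i) * if l = m j then 1 else 0) :=
        hasSum_sum fun l _ => (hs.right_orthonormal l (m j)).mul_left _
      simp only [mul_ite, mul_one, mul_zero, Finset.sum_ite_eq', Finset.mem_univ, if_true] at h1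
      refine h1.congr_fun fun t => ?_
      rw [hs.decomp, Finset.sum_mul]
      exact Finset.sum_congr rfl fun l _ => by ring)
  have h2 : (Matrix.of fun i j => σ (m j) * V (m j) (J i)).det =
      (∏ i, σ (m i)) * tupleDet (fun i => V (m i)) J := by
    rw [tupleDet, ← Matrix.det_transpose (Matrix.of fun i j => V (m i) (J j))]
    exact Matrix.det_mul_row (fun j => σ (m j)) (Matrix.of fun i j => V (m j) (J i))
  rw [h2] at h
  exact h

theorem abs_le_of_hasSum_abs {ι : Type*} {a : ι → ℝ} {s s' : ℝ} (h : HasSum a s)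
    (h' : HasSum (fun i => |a i|) s') : |s| ≤ s' :=
  abs_le.2 ⟨hasSum_le (fun i => neg_abs_le (a i)) h'.neg h,
    hasSum_le (fun i => le_abs_self (a i)) h h'⟩

/-- The sum of a real series whose absolute value equals the sum of absolute values has terms of
constant sign. -/
theorem exists_sign_of_abs_hasSum_eq {ι : Type*} {a : ι → ℝ} {s s' : ℝ} (h : HasSum a s)
    (h' : HasSum (fun i => |a i|) s') (he : |s| = s') :
    ∃ ε : ℝ, (ε = 1 ∨ ε = -1) ∧ ∀ i, 0 ≤ ε * a i := by
  rcases abs_choice s with hc | hc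
  · refine ⟨1, Or.inl rfl, fun i => ?_⟩
    have h1 := (hasSum_zero_iff_of_nonneg (fun i => sub_nonneg.2 (le_abs_self (a i)))).1
      (by simpa [← he, hc] using h'.sub h)
    have := congr_fun h1 i
    simp only [Pi.zero_apply] at this
    linarith [abs_nonneg (a i)]
  · refine ⟨-1, Or.inr rfl, fun i => ?_⟩
    have h1 := (hasSum_zero_iff_of_nonneg (f := fun i => |a i| + a i)
      (fun i => show 0 ≤ |a i| + a i by linarith [neg_abs_le (a i)])).1
      (by simpa [← he, hc] using h'.add h)
    have := congr_fun h1 i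
    simp only [Pi.zero_apply] at this
    linarith [abs_nonneg (a i)]

/-- Perron–Frobenius for the compounds of a strictly `k`-positive Hankel matrix: leading singular
vectors of the `p`-th compound have constant sign. -/
theorem exists_sign_of_leading_singular_vectors {n k p : ℕ} {g : ℕ → ℝ} {V U : Fin n → ℕ → ℝ}
    {σ : Fin n → ℝ} (hs : IsHankelSVD g V U σ) (hg : HankelStrictlyKPositive g k)
    (hp : 1 ≤ p) (hpk : p ≤ k) {m : Fin p → Fin n} (hm : Function.Injective m)
    (hmax : ∀ m' : Fin p → Fin n, Function.Injective m' → ∏ i, σ (m' i) ≤ ∏ i, σ (m i)) :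
    ∃ ε : ℝ, (ε = 1 ∨ ε = -1) ∧
      (∀ J : Fin p → ℕ, Function.Injective J →
        0 < ε * (orderSign J * tupleDet (fun i => V (m i)) J)) ∧
      (∀ J : Fin p → ℕ, 0 ≤ ε * (orderSign J * tupleDet (fun i => U (m i)) J)) ∧
      ∃ J : Fin p → ℕ, Function.Injective J ∧ tupleDet (fun i => U (m i)) J ≠ 0 := by
  set v := tupleDet fun i => V (m i) with hvdef
  set u := tupleDet fun i => U (m i) with hudef
  set S := ∏ i, σ (m i) with hSdef
  have hSpos : 0 < S := Finset.prod_pos fun i _ => hs.pos _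
  have hfac : (0 : ℝ) < p.factorial := by exact_mod_cast p.factorial_pos
  have hvv : HasSum (fun J => v J * v J) p.factorial :=
    hasSum_tupleDet_mul_self hs.left_orthonormal hm
  have huu : HasSum (fun J => u J * u J) p.factorial :=
    hasSum_tupleDet_mul_self hs.right_orthonormal hm
  have hDu : ∀ J, HasSum (fun L => (hankelSub g J L).det * u L) (p.factorial * (S * v J)) :=
    hasSum_hankelSub_mul_tupleDet hs m
  have hu0 : ∀ J, ¬ Function.Injective J → u J = 0 := fun J hJ => tupleDet_eq_zero _ hJ
  have hsq : ∀ J, (orderSign J * |u J|) * (orderSign J * |u J|) = u J * u J := by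
    intro J
    by_cases hJ : Function.Injective J
    · rw [mul_mul_mul_comm, orderSign_mul_self hJ, one_mul, abs_mul_abs_self]
    · simp [hu0 J hJ]
  have hhh : HasSum (fun J => (orderSign J * |u J|) * (orderSign J * |u J|)) p.factorial :=
    huu.congr_fun hsq
  let h := toEll2 (fun J => orderSign J * |u J|) hhh.summable
  obtain ⟨F, hF1, hF2⟩ := compound_hankel_bound hs hmax h (fun τ J => by
    simp only [h, toEll2_apply]
    rw [orderSign_comp_perm, hudef, tupleDet_comp_perm, abs_mul]
    rcases Int.units_eq_one_or (Equiv.Perm.sign τ) with h' | h' <;> simp [h'])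
  have hinner : inner ℝ h h = (p.factorial : ℝ) := (hasSum_ell2_inner h h).unique hhh
  have habs : ∀ J, Function.Injective J → HasSum (fun L => |(hankelSub g J L).det * u L|)
      (orderSign J * (p.factorial * F J)) := by
    intro J hJ
    refine ((hF1 J).mul_left (orderSign J)).congr_fun fun L => ?_
    simp only [h, toEll2_apply]
    by_cases hL : Function.Injective L
    · have h1 := orderSign_mul_hankelSub_det_pos hg hp hpk hJ hL
      have h2 : |orderSign J * orderSign L| = 1 := by
        have hJ' := orderSign_mul_self hJ
        have hL' := orderSign_mul_self hL
        have : (orderSign J * orderSign L) * (orderSign J * orderSign L) = 1 := by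
          rw [mul_mul_mul_comm, hJ', hL', one_mul]
        exact abs_eq_abs.2 (by simpa using mul_self_eq_one_iff.1 this) |>.trans abs_one
      have h3 : |(hankelSub g J L).det| = orderSign J * orderSign L * (hankelSub g J L).det := by
        rw [← abs_of_pos h1, abs_mul, h2, one_mul]
      rw [abs_mul, h3]
      ring
    · simp [hu0 L hL]
  have hle : ∀ J, (S * v J) * (S * v J) ≤ F J * F J := by
    intro J
    by_cases hJ : Function.Injective J
    · have h1 : |p.factorial * (S * v J)| ≤ orderSign J * (p.factorial * F J) :=
        abs_le_of_hasSum_abs (hDu J) (habs J hJ)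
      have h2 := abs_le_abs_of_nonneg (abs_nonneg _) h1
      rw [abs_abs, ← sq_le_sq, mul_pow, mul_pow (orderSign J), mul_pow (p.factorial : ℝ),
        sq (orderSign J), orderSign_mul_self hJ, one_mul] at h2
      have := le_of_mul_le_mul_left h2 (by positivity)
      simpa only [sq] using this
    · have : v J = 0 := tupleDet_eq_zero _ hJ
      rw [this, mul_zero, mul_zero]
      exact mul_self_nonneg _
  have heq : ∀ J, F J * F J = (S * v J) * (S * v J) := by
    have h1 : HasSum (fun J => F J * F J - (S * v J) * (S * v J))
        (inner ℝ F F - S * S * p.factorial) :=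
      (hasSum_ell2_inner F F).sub ((hvv.mul_left (S * S)).congr_fun fun J => by ring)
    have h2 : inner ℝ F F - S * S * p.factorial ≤ 0 := by
      rw [hinner] at hF2
      linarith
    have h3 : inner ℝ F F - S * S * p.factorial = 0 :=
      le_antisymm h2 (h1.nonneg fun J => sub_nonneg.2 (hle J))
    rw [h3] at h1
    intro J
    exact sub_eq_zero.1 (congr_fun
      ((hasSum_zero_iff_of_nonneg fun J => sub_nonneg.2 (hle J)).1 h1) J)
  have hJ₀ : StrictMono (Fin.val : Fin p → ℕ) := Fin.val_strictMono
  have hs₀ := orderSign_of_strictMono hJ₀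
  have habs₀ := habs _ hJ₀.injective
  obtain ⟨ε, hε, hsign⟩ := exists_sign_of_abs_hasSum_eq (hDu _) habs₀ (by
    have h1 : 0 ≤ orderSign (Fin.val : Fin p → ℕ) * (p.factorial * F Fin.val) :=
      habs₀.nonneg fun L => abs_nonneg _
    rw [hs₀, one_mul] at h1 ⊢
    have h2 : |S * v Fin.val| = |F Fin.val| :=
      (abs_eq_abs.2 (mul_self_eq_mul_self_iff.1 (heq Fin.val))).symm
    have h3 := abs_of_nonneg h1
    rw [abs_mul] at h3 ⊢
    rw [h2, h3])
  have hεε : ε * ε = 1 := by rcases hε with rfl | rfl <;> norm_num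
  have hu_sign : ∀ L : Fin p → ℕ, 0 ≤ ε * (orderSign L * u L) := by
    intro L
    by_cases hL : Function.Injective L
    · have h1 := orderSign_mul_hankelSub_det_pos hg hp hpk hJ₀.injective hL
      rw [hs₀, one_mul] at h1
      have h2 : (orderSign L * (hankelSub g Fin.val L).det) * (ε * (orderSign L * u L)) =
          ε * ((hankelSub g Fin.val L).det * u L) := by
        linear_combination
          (hankelSub g Fin.val L).det * ε * u L * orderSign_mul_self hL
      have h3 := hsign L
      rw [← h2] at h3
      exact nonneg_of_mul_nonneg_right h3 h1
    · simp [hu0 L hL]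
  obtain ⟨L₀, hL₀⟩ : ∃ L, u L ≠ 0 := by
    by_contra! hall
    have : HasSum (fun J => u J * u J) 0 := by simp [hall]
    exact hfac.ne (this.unique huu)
  have hL₀i : Function.Injective L₀ := by
    by_contra hcon
    exact hL₀ (hu0 _ hcon)
  refine ⟨ε, hε, fun J hJ => ?_, hu_sign, L₀, hL₀i, hL₀⟩
  have h1 : HasSum (fun L => (orderSign J * orderSign L * (hankelSub g J L).det) *
      (ε * (orderSign L * u L))) (ε * orderSign J * (p.factorial * (S * v J))) := by
    refine ((hDu J).mul_left (ε * orderSign J)).congr_fun fun L => ?_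
    by_cases hL : Function.Injective L
    · linear_combination
        orderSign J * (hankelSub g J L).det * ε * u L * orderSign_mul_self hL
    · simp [hu0 L hL]
  have hnn : ∀ L, 0 ≤ (orderSign J * orderSign L * (hankelSub g J L).det) *
      (ε * (orderSign L * u L)) := by
    intro L
    by_cases hL : Function.Injective L
    · exact mul_nonneg (orderSign_mul_hankelSub_det_pos hg hp hpk hJ hL).le (hu_sign L)
    · simp [hu0 L hL]
  have hpos : 0 < ε * orderSign J * (p.factorial * (S * v J)) := by
    rw [← h1.tsum_eq]
    refine h1.summable.tsum_pos hnn L₀ ?_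
    refine mul_pos (orderSign_mul_hankelSub_det_pos hg hp hpk hJ hL₀i)
      (lt_of_le_of_ne (hu_sign L₀) (Ne.symm ?_))
    refine mul_ne_zero ?_ (mul_ne_zero ?_ hL₀)
    · rintro rfl
      simp at hεε
    · intro h0
      have := orderSign_mul_self hL₀i
      simp [h0] at this
  have h2 : ε * orderSign J * (p.factorial * (S * v J)) =
      (p.factorial * S) * (ε * (orderSign J * v J)) := by ring
  rw [h2] at hpos
  exact pos_of_mul_pos_right hpos (by positivity)

theorem le_val_of_strictMono {p n : ℕ} {m : Fin p → Fin n} (hm : StrictMono m) (i : Fin p) :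
    (i : ℕ) ≤ m i := by
  obtain ⟨i, hi⟩ := i
  induction i with
  | zero => exact Nat.zero_le _
  | succ i ih =>
    have h1 := ih (Nat.lt_of_succ_lt hi)
    have h2 : m ⟨i, Nat.lt_of_succ_lt hi⟩ < m ⟨i + 1, hi⟩ := hm (by simp [Fin.lt_def])
    have h3 : (m ⟨i, Nat.lt_of_succ_lt hi⟩ : ℕ) < m ⟨i + 1, hi⟩ := h2
    simp only at h1 ⊢
    omega

namespace IsHankelSVD

variable {n k : ℕ} {g : ℕ → ℝ} {V U : Fin n → ℕ → ℝ} {σ : Fin n → ℝ}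

theorem prod_le_prod_castLE (hs : IsHankelSVD g V U σ) {p : ℕ} (hp : p ≤ n) {m : Fin p → Fin n}
    (hm : Function.Injective m) : ∏ i, σ (m i) ≤ ∏ i, σ (Fin.castLE hp i) := by
  obtain ⟨τ, hτ⟩ := exists_perm_strictMono hm
  rw [← Equiv.prod_comp τ]
  refine Finset.prod_le_prod (fun i _ => (hs.pos _).le) fun i _ => hs.antitone _ _ ?_
  exact le_val_of_strictMono hτ i

theorem exists_sign_castLE (hs : IsHankelSVD g V U σ) (hg : HankelStrictlyKPositive g k)
    {p : ℕ} (hp1 : 1 ≤ p) (hpk : p ≤ k) (hp : p ≤ n) :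
    ∃ ε : ℝ, (ε = 1 ∨ ε = -1) ∧
      (∀ J : Fin p → ℕ, Function.Injective J →
        0 < ε * (orderSign J * tupleDet (fun i => V (Fin.castLE hp i)) J)) ∧
      (∀ J : Fin p → ℕ, 0 ≤ ε * (orderSign J * tupleDet (fun i => U (Fin.castLE hp i)) J)) ∧
      ∃ J : Fin p → ℕ, Function.Injective J ∧
        tupleDet (fun i => U (Fin.castLE hp i)) J ≠ 0 :=
  exists_sign_of_leading_singular_vectors hs hg hp1 hpk (Fin.castLE_injective hp)
    fun _ hm => hs.prod_le_prod_castLE hp hm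

/-- The leading singular values of a strictly `k`-positive Hankel matrix are simple. -/
theorem singularValue_lt (hs : IsHankelSVD g V U σ) (hg : HankelStrictlyKPositive g k)
    {q : ℕ} (hqk : q + 1 ≤ k) (hq : q + 1 < n) :
    σ ⟨q + 1, hq⟩ < σ ⟨q, Nat.lt_of_succ_lt hq⟩ := by
  refine lt_of_le_of_ne (hs.antitone _ _ (by simp [Fin.le_def])) fun heq => ?_
  let m : Fin (q + 1) → Fin n := fun i => if i = Fin.last q then ⟨q + 1, hq⟩ else
    Fin.castLE hq.le i
  have hne : ∀ i : Fin (q + 1), Fin.castLE hq.le i ≠ ⟨q + 1, hq⟩ := by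
    intro i h
    have := congr_arg Fin.val h
    simp only [Fin.val_castLE] at this
    omega
  have hm : Function.Injective m := by
    intro i j hij
    simp only [m] at hij
    split_ifs at hij with h1 h2 h2
    · rw [h1, h2]
    · exact (hne j hij.symm).elim
    · exact (hne i hij).elim
    · exact Fin.castLE_injective _ hij
  have hprod : ∏ i, σ (m i) = ∏ i, σ (Fin.castLE hq.le i) := by
    refine Finset.prod_congr rfl fun i _ => ?_
    simp only [m]
    split_ifs with h
    · rw [h, heq]
      rfl
    · rfl
  obtain ⟨ε, hε, hv, -⟩ := hs.exists_sign_castLE hg (Nat.succ_pos q) hqk hq.le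
  obtain ⟨ε', hε', hv', -⟩ := exists_sign_of_leading_singular_vectors hs hg (Nat.succ_pos q) hqk hm
    fun m' hm' => hprod ▸ hs.prod_le_prod_castLE hq.le hm'
  have h := hasSum_tupleDet_mul (fun i => V (Fin.castLE hq.le i)) (fun i => V (m i))
    (Matrix.of fun i j => if Fin.castLE hq.le i = m j then 1 else 0)
    fun i j => hs.left_orthonormal _ _
  rw [Matrix.det_eq_zero_of_column_eq_zero (Fin.last q) (fun i => by simp [m, hne]),
    mul_zero] at h
  have h1 := h.mul_left (ε * ε')
  rw [mul_zero] at h1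
  have hterm : ∀ J : Fin (q + 1) → ℕ, Function.Injective J → 0 < ε * ε' *
      (tupleDet (fun i => V (Fin.castLE hq.le i)) J * tupleDet (fun i => V (m i)) J) := by
    intro J hJ
    have := mul_pos (hv J hJ) (hv' J hJ)
    refine this.trans_eq ?_
    linear_combination ε * ε' * tupleDet (fun i => V (Fin.castLE hq.le i)) J *
      tupleDet (fun i => V (m i)) J * orderSign_mul_self hJ
  have hpos := h1.summable.tsum_pos (fun J => by
    by_cases hJ : Function.Injective J
    · exact (hterm J hJ).le
    · simp [tupleDet_eq_zero _ hJ]) Fin.val (hterm _ Fin.val_injective)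
  rw [h1.tsum_eq] at hpos
  exact lt_irrefl _ hpos

theorem singularValue_ne (hs : IsHankelSVD g V U σ) (hg : HankelStrictlyKPositive g k)
    (hkn : k ≤ n) {a b : Fin n} (ha : (a : ℕ) + 1 < k) (hab : a ≠ b) : σ a ≠ σ b := by
  rcases lt_or_gt_of_ne hab with h | h
  · have h1 := hs.singularValue_lt hg (q := a) (by omega) (by omega)
    have h2 := hs.antitone ⟨a + 1, by omega⟩ b (by simpa [Fin.le_def] using h)
    exact (h2.trans_lt h1).ne'
  · obtain ⟨a, ha'⟩ := a
    rw [Fin.lt_def] at h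
    simp only at h ha
    obtain ⟨q, rfl⟩ : ∃ q, a = q + 1 := ⟨a - 1, by omega⟩
    have h1 := hs.singularValue_lt hg (q := q) (by omega) ha'
    have h2 := hs.antitone b ⟨q, by omega⟩ (by rw [Fin.le_def]; simp only; omega)
    exact (h1.trans_le h2).ne

end IsHankelSVD

theorem summable_mul_of_summable_mul_self {f h : ℕ → ℝ} (hf : Summable fun t => f t * f t)
    (hh : Summable fun t => h t * h t) : Summable fun t => f t * h t := by
  refine Summable.of_norm_bounded (hf.add hh) fun t => ?_
  rw [Real.norm_eq_abs, abs_le]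
  constructor <;> nlinarith [sq_nonneg (f t + h t), sq_nonneg (f t - h t), mul_self_nonneg (f t),
    mul_self_nonneg (h t)]

/-- The Gram matrix between left and right singular vectors. -/
noncomputable def crossGram {n : ℕ} (V U : Fin n → ℕ → ℝ) : Matrix (Fin n) (Fin n) ℝ :=
  Matrix.of fun a b => ∑' t, V a t * U b t

namespace IsHankelSVD

variable {n k : ℕ} {g : ℕ → ℝ} {V U : Fin n → ℕ → ℝ} {σ : Fin n → ℝ}

theorem hasSum_crossGram (hs : IsHankelSVD g V U σ) (a b : Fin n) :
    HasSum (fun t => V a t * U b t) (crossGram V U a b) :=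
  (summable_mul_of_summable_mul_self (hs.left_orthonormal a a).summable
    (hs.right_orthonormal b b).summable).hasSum

theorem right_eq_sum_left (hs : IsHankelSVD g V U σ) (a : Fin n) (s : ℕ) :
    σ a * U a s = ∑ i, σ i * crossGram V U a i * V i s := by
  have h1 : HasSum (fun t => V a t * g (t + s)) (∑ i, σ i * U i s * if a = i then 1 else 0) := by
    refine (hasSum_sum fun i _ => (hs.left_orthonormal a i).mul_left (σ i * U i s)).congr_fun
      fun t => ?_
    rw [hs.decomp, Finset.mul_sum]
    exact Finset.sum_congr rfl fun i _ => by ring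
  have h2 : HasSum (fun t => V a t * g (t + s)) (∑ i, σ i * V i s * crossGram V U a i) := by
    refine (hasSum_sum fun i _ => (hs.hasSum_crossGram a i).mul_left (σ i * V i s)).congr_fun
      fun t => ?_
    rw [add_comm, hs.decomp, Finset.mul_sum]
    exact Finset.sum_congr rfl fun i _ => by ring
  have h3 := h1.unique h2
  simp only [mul_ite, mul_one, mul_zero, Finset.sum_ite_eq, Finset.mem_univ, if_true] at h3
  rw [h3]
  exact Finset.sum_congr rfl fun i _ => by ring

theorem diagonal_mul_crossGram_transpose (hs : IsHankelSVD g V U σ) :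
    Matrix.diagonal σ * (crossGram V U)ᵀ = crossGram V U * Matrix.diagonal σ := by
  ext a b
  rw [Matrix.diagonal_mul, Matrix.mul_diagonal, Matrix.transpose_apply]
  have h1 := (hs.hasSum_crossGram b a).mul_left (σ a)
  have h2 : HasSum (fun t => σ a * (V b t * U a t))
      (∑ i, σ i * crossGram V U a i * if b = i then 1 else 0) := by
    refine (hasSum_sum fun i _ => (hs.left_orthonormal b i).mul_left
      (σ i * crossGram V U a i)).congr_fun fun t => ?_
    rw [mul_left_comm, hs.right_eq_sum_left, Finset.mul_sum]
    exact Finset.sum_congr rfl fun i _ => by ring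
  have h3 := h1.unique h2
  simp only [mul_ite, mul_one, mul_zero, Finset.sum_ite_eq, Finset.mem_univ, if_true] at h3
  rw [h3, mul_comm]

theorem crossGram_mul_diagonal_mul_crossGram (hs : IsHankelSVD g V U σ) :
    crossGram V U * Matrix.diagonal σ * crossGram V U = Matrix.diagonal σ := by
  ext a b
  have h1 := (hs.right_orthonormal a b).mul_left (σ a)
  have h2 : HasSum (fun t => σ a * (U a t * U b t))
      (∑ i, σ i * crossGram V U a i * crossGram V U i b) := by
    refine (hasSum_sum fun i _ => (hs.hasSum_crossGram i b).mul_left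
      (σ i * crossGram V U a i)).congr_fun fun t => ?_
    rw [← mul_assoc, hs.right_eq_sum_left, Finset.sum_mul]
    exact Finset.sum_congr rfl fun i _ => by ring
  have h3 := h1.unique h2
  rw [Matrix.mul_apply]
  simp only [Matrix.mul_diagonal]
  rw [Matrix.diagonal_apply]
  simp only [mul_ite, mul_one, mul_zero] at h3
  rw [h3]
  exact Finset.sum_congr rfl fun i _ => by ring

theorem isUnit_diagonal (hs : IsHankelSVD g V U σ) : IsUnit (Matrix.diagonal σ) := by
  rw [Matrix.isUnit_iff_isUnit_det, Matrix.det_diagonal, isUnit_iff_ne_zero]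
  exact Finset.prod_ne_zero_iff.2 fun i _ => (hs.pos i).ne'

theorem crossGram_transpose_mul_self (hs : IsHankelSVD g V U σ) :
    (crossGram V U)ᵀ * crossGram V U = 1 := by
  refine hs.isUnit_diagonal.mul_left_cancel ?_
  rw [← Matrix.mul_assoc, hs.diagonal_mul_crossGram_transpose,
    hs.crossGram_mul_diagonal_mul_crossGram, Matrix.mul_one]

theorem crossGram_commute (hs : IsHankelSVD g V U σ) (a b : Fin n) :
    crossGram V U a b * σ b ^ 2 = σ a ^ 2 * crossGram V U a b := by
  have h1 := hs.diagonal_mul_crossGram_transpose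
  have h2 := hs.crossGram_mul_diagonal_mul_crossGram
  have h3 := hs.crossGram_transpose_mul_self
  set W := crossGram V U
  set D := Matrix.diagonal σ
  have h4 : D * W = Wᵀ * D := by
    calc D * W = Wᵀ * W * (D * W) := by rw [h3, Matrix.one_mul]
      _ = Wᵀ * (W * D * W) := by simp only [Matrix.mul_assoc]
      _ = Wᵀ * D := by rw [h2]
  have h5 : W * D * D = D * (D * W) := by
    rw [← h1, h4, Matrix.mul_assoc]
  have h6 := congr_fun (congr_fun h5 a) b
  simp only [D, Matrix.mul_diagonal, Matrix.diagonal_mul] at h6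
  linear_combination h6

theorem crossGram_eq_zero (hs : IsHankelSVD g V U σ) (hg : HankelStrictlyKPositive g k)
    (hkn : k ≤ n) {a b : Fin n} (ha : (a : ℕ) + 1 < k) (hab : a ≠ b) : crossGram V U a b = 0 := by
  have h1 := hs.crossGram_commute a b
  have h2 := hs.singularValue_ne hg hkn ha hab
  by_contra h0
  have h3 : σ b ^ 2 = σ a ^ 2 := mul_left_cancel₀ h0 (by rw [h1, mul_comm])
  exact h2 ((pow_left_inj₀ (hs.pos b).le (hs.pos a).le two_ne_zero).1 h3).symm

theorem crossGram_mul_self_eq_one (hs : IsHankelSVD g V U σ) (hg : HankelStrictlyKPositive g k)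
    (hkn : k ≤ n) {a : Fin n} (ha : (a : ℕ) + 1 < k) :
    crossGram V U a a * crossGram V U a a = 1 := by
  have h1 := mul_eq_one_comm.1 hs.crossGram_transpose_mul_self
  have h2 := congr_fun (congr_fun h1 a) a
  rw [Matrix.mul_apply, Finset.sum_eq_single a] at h2
  · simpa using h2
  · intro b _ hb
    rw [hs.crossGram_eq_zero hg hkn ha hb.symm, zero_mul]
  · simp

theorem det_crossGram_pos (hs : IsHankelSVD g V U σ) (hg : HankelStrictlyKPositive g k)
    {p : ℕ} (hp1 : 1 ≤ p) (hpk : p ≤ k) (hp : p ≤ n) :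
    0 < ((crossGram V U).submatrix (Fin.castLE hp) (Fin.castLE hp)).det := by
  obtain ⟨ε, hε, hv, hu, L, hL, hL0⟩ := hs.exists_sign_castLE hg hp1 hpk hp
  have hεε : ε * ε = 1 := by rcases hε with rfl | rfl <;> norm_num
  have h := hasSum_tupleDet_mul (fun i => V (Fin.castLE hp i)) (fun i => U (Fin.castLE hp i))
    ((crossGram V U).submatrix (Fin.castLE hp) (Fin.castLE hp))
    fun i j => hs.hasSum_crossGram _ _
  have hterm : ∀ J : Fin p → ℕ, 0 ≤ tupleDet (fun i => V (Fin.castLE hp i)) J *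
      tupleDet (fun i => U (Fin.castLE hp i)) J := by
    intro J
    by_cases hJ : Function.Injective J
    · refine (mul_nonneg (hv J hJ).le (hu J)).trans_eq ?_
      rw [mul_mul_mul_comm, hεε, one_mul, mul_mul_mul_comm, orderSign_mul_self hJ, one_mul]
    · simp [tupleDet_eq_zero _ hJ]
  have hpos := h.summable.tsum_pos hterm L (lt_of_le_of_ne (hterm L) (Ne.symm (mul_ne_zero (by
    intro h0
    have := hv L hL
    simp [h0] at this) hL0)))
  rw [h.tsum_eq] at hpos
  exact pos_of_mul_pos_right hpos (by positivity)

theorem prod_crossGram_pos (hs : IsHankelSVD g V U σ) (hg : HankelStrictlyKPositive g k)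
    (hkn : k ≤ n) {p : ℕ} (hpk : p < k) (hp : p ≤ n) :
    0 < ∏ i : Fin p, crossGram V U (Fin.castLE hp i) (Fin.castLE hp i) := by
  rcases Nat.eq_zero_or_pos p with rfl | hp1
  · simp
  have h := hs.det_crossGram_pos hg hp1 hpk.le hp
  have hdiag : (crossGram V U).submatrix (Fin.castLE hp) (Fin.castLE hp) =
      Matrix.diagonal fun i => crossGram V U (Fin.castLE hp i) (Fin.castLE hp i) := by
    ext i j
    rw [Matrix.submatrix_apply, Matrix.diagonal_apply]
    split_ifs with hij
    · rw [hij]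
    · exact hs.crossGram_eq_zero hg hkn (by rw [Fin.val_castLE]; omega)
        ((Fin.castLE_injective hp).ne hij)
  rwa [hdiag, Matrix.det_diagonal] at h

/-- The leading left and right singular vectors of a strictly `k`-positive Hankel matrix agree. -/
theorem left_eq_right (hs : IsHankelSVD g V U σ) (hg : HankelStrictlyKPositive g k)
    (hkn : k ≤ n) {a : Fin n} (ha : (a : ℕ) + 1 < k) : V a = U a := by
  have h1 := hs.prod_crossGram_pos hg hkn (p := a + 1) ha (by omega)
  have h2 := hs.prod_crossGram_pos hg hkn (p := a) (by omega) (by omega)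
  rw [Fin.prod_univ_castSucc] at h1
  have h3 : 0 < crossGram V U a a := pos_of_mul_pos_right h1 h2.le
  have h4 : crossGram V U a a = 1 := by
    rcases mul_self_eq_one_iff.1 (hs.crossGram_mul_self_eq_one hg hkn ha) with h | h
    · exact h
    · linarith
  ext s
  have h5 := hs.right_eq_sum_left a s
  rw [Finset.sum_eq_single a, h4, mul_one] at h5
  · exact (mul_left_cancel₀ (hs.pos a).ne' h5).symm
  · intro b _ hb
    rw [hs.crossGram_eq_zero hg hkn ha hb.symm]
    ring
  · simp

/-- The compression of the shift to the span of the leading singular vectors has positive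
determinant. -/
theorem det_shift_compression_pos (hs : IsHankelSVD g V U σ) (hg : HankelStrictlyKPositive g k)
    {p : ℕ} (hp1 : 1 ≤ p) (hpk : p ≤ k) (hp : p ≤ n) (N : Matrix (Fin p) (Fin p) ℝ)
    (hN : ∀ i j, HasSum (fun t => V (Fin.castLE hp i) t * V (Fin.castLE hp j) (t + 1)) (N i j)) :
    0 < N.det := by
  obtain ⟨ε, hε, hv, -⟩ := hs.exists_sign_castLE hg hp1 hpk hp
  have hεε : ε * ε = 1 := by rcases hε with rfl | rfl <;> norm_num
  have h := hasSum_tupleDet_mul (fun i => V (Fin.castLE hp i))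
    (fun i t => V (Fin.castLE hp i) (t + 1)) N hN
  have hterm : ∀ J : Fin p → ℕ, Function.Injective J →
      0 < tupleDet (fun i => V (Fin.castLE hp i)) J *
        tupleDet (fun i t => V (Fin.castLE hp i) (t + 1)) J := by
    intro J hJ
    have hJ' : Function.Injective fun i => J i + 1 := fun i j hij =>
      hJ (Nat.succ_injective hij)
    have h1 := hv _ hJ'
    rw [orderSign_succ] at h1
    refine (mul_pos (hv J hJ) h1).trans_eq ?_
    rw [mul_mul_mul_comm, hεε, one_mul, mul_mul_mul_comm, orderSign_mul_self hJ, one_mul]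
    rfl
  have hpos := h.summable.tsum_pos (fun J => by
    by_cases hJ : Function.Injective J
    · exact (hterm J hJ).le
    · simp [tupleDet_eq_zero _ hJ]) Fin.val (hterm _ Fin.val_injective)
  rw [h.tsum_eq] at hpos
  exact pos_of_mul_pos_right hpos (by positivity)

end IsHankelSVD

theorem sum_range_vecMulVec_pow {n : ℕ} {A D : Matrix (Fin n) (Fin n) ℝ} {c : Fin n → ℝ}
    (h : Aᵀ * D * A - D + Matrix.vecMulVec c c = 0) (N : ℕ) :
    ∑ t ∈ Finset.range N, Matrix.vecMulVec (Matrix.vecMul c (A ^ t)) (Matrix.vecMul c (A ^ t)) =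
      D - (A ^ N)ᵀ * D * A ^ N := by
  induction N with
  | zero => simp
  | succ N ih =>
    have hc : Matrix.vecMulVec c c = D - Aᵀ * D * A := by
      rw [← sub_eq_zero, ← h]; abel
    have h1 : Matrix.vecMulVec (Matrix.vecMul c (A ^ N)) (Matrix.vecMul c (A ^ N)) =
        (A ^ N)ᵀ * Matrix.vecMulVec c c * A ^ N := by
      rw [Matrix.mul_vecMulVec, Matrix.vecMulVec_mul, Matrix.mulVec_transpose]
    rw [Finset.sum_range_succ, ih, h1, hc, pow_succ' A N, Matrix.transpose_mul]
    noncomm_ring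

/-- The solution of the observability Stein equation is the observability Gramian. -/
theorem hasSum_observabilityGramian {n : ℕ} {A D : Matrix (Fin n) (Fin n) ℝ} {c : Fin n → ℝ}
    (h : Aᵀ * D * A - D + Matrix.vecMulVec c c = 0)
    (hA : ∀ i j, Filter.Tendsto (fun t => (A ^ t) i j) Filter.atTop (nhds 0)) (i j : Fin n) :
    HasSum (fun t => Matrix.vecMul c (A ^ t) i * Matrix.vecMul c (A ^ t) j) (D i j) := by
  have hA' : Filter.Tendsto (fun t => A ^ t) Filter.atTop (nhds 0) :=
    tendsto_pi_nhds.2 fun i => tendsto_pi_nhds.2 fun j => hA i j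
  have hcont : Continuous fun M : Matrix (Fin n) (Fin n) ℝ => D - Mᵀ * D * M := by fun_prop
  have hlim : Filter.Tendsto (fun N => D - (A ^ N)ᵀ * D * A ^ N) Filter.atTop (nhds D) := by
    have h0 := (hcont.tendsto 0).comp hA'
    rw [Matrix.mul_zero, sub_zero] at h0
    exact h0
  have hpart : ∀ i j, Filter.Tendsto (fun N => ∑ t ∈ Finset.range N,
      Matrix.vecMul c (A ^ t) i * Matrix.vecMul c (A ^ t) j) Filter.atTop (nhds (D i j)) := by
    intro i j
    refine (tendsto_pi_nhds.1 (tendsto_pi_nhds.1 hlim i) j).congr fun N => ?_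
    rw [← sum_range_vecMulVec_pow h N, Matrix.sum_apply]
    rfl
  have hdiag : ∀ i, Summable fun t => Matrix.vecMul c (A ^ t) i * Matrix.vecMul c (A ^ t) i :=
    fun i => ((hasSum_iff_tendsto_nat_of_nonneg (fun t => mul_self_nonneg _) _).2
      (hpart i i)).summable
  exact (summable_mul_of_summable_mul_self (hdiag i) (hdiag j)).hasSum_iff_tendsto_nat.2
    (hpart i j)

theorem dotProduct_diagonal_mulVec_self {n : ℕ} (σ y : Fin n → ℝ) :
    y ⬝ᵥ (Matrix.diagonal σ).mulVec y = ∑ i, σ i * y i ^ 2 := by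
  simp only [dotProduct, Matrix.mulVec_diagonal]
  exact Finset.sum_congr rfl fun i _ => by ring

theorem stein_mulVec {n : ℕ} {A : Matrix (Fin n) (Fin n) ℝ} {σ c : Fin n → ℝ}
    (h : Aᵀ * Matrix.diagonal σ * A - Matrix.diagonal σ + Matrix.vecMulVec c c = 0)
    (w : Fin n → ℝ) :
    Aᵀ.mulVec ((Matrix.diagonal σ).mulVec (A.mulVec w)) =
      (Matrix.diagonal σ).mulVec w - (c ⬝ᵥ w) • c := by
  have h1 := congr_arg (fun M => M.mulVec w) h
  simp only [Matrix.add_mulVec, Matrix.sub_mulVec, Matrix.zero_mulVec, ← Matrix.mulVec_mulVec,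
    Matrix.vecMulVec_mulVec] at h1
  rw [eq_sub_iff_add_eq, ← sub_eq_zero, ← h1]
  simp
  abel

theorem stein_sum_sq {n : ℕ} {A : Matrix (Fin n) (Fin n) ℝ} {σ c : Fin n → ℝ}
    (h : Aᵀ * Matrix.diagonal σ * A - Matrix.diagonal σ + Matrix.vecMulVec c c = 0)
    (w : Fin n → ℝ) :
    ∑ i, σ i * A.mulVec w i ^ 2 + (c ⬝ᵥ w) ^ 2 = ∑ i, σ i * w i ^ 2 := by
  have h1 := congr_arg (fun v => w ⬝ᵥ v) (stein_mulVec h w)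
  simp only [dotProduct_sub, dotProduct_smul, smul_eq_mul,
    dotProduct_diagonal_mulVec_self] at h1
  rw [Matrix.dotProduct_mulVec, Matrix.vecMul_transpose, dotProduct_diagonal_mulVec_self,
    dotProduct_comm w c] at h1
  linarith

/-- An eigenvector of a leading block of a balanced realization is observable, and its eigenvalue
has modulus less than one, provided the truncated singular values are strictly smaller. -/
theorem sq_lt_one_and_dotProduct_ne_zero {n r : ℕ} {A : Matrix (Fin n) (Fin n) ℝ}
    {σ b c : Fin n → ℝ} {τ μ : ℝ}
    (hb : A * Matrix.diagonal σ * Aᵀ - Matrix.diagonal σ + Matrix.vecMulVec b b = 0)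
    (hc : Aᵀ * Matrix.diagonal σ * A - Matrix.diagonal σ + Matrix.vecMulVec c c = 0)
    (hA : ∀ i j, Filter.Tendsto (fun t => (A ^ t) i j) Filter.atTop (nhds 0))
    (hσ : ∀ i, 0 < σ i) (hτ : 0 < τ)
    (hlt : ∀ i : Fin n, (i : ℕ) < r → τ < σ i) (hle : ∀ i : Fin n, r ≤ (i : ℕ) → σ i ≤ τ)
    {w : Fin n → ℝ} (hw0 : w ≠ 0) (hw : ∀ i : Fin n, r ≤ (i : ℕ) → w i = 0)
    (hAw : ∀ i : Fin n, (i : ℕ) < r → A.mulVec w i = μ * w i) :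
    μ ^ 2 < 1 ∧ c ⬝ᵥ w ≠ 0 := by
  let x : Fin n → ℝ := fun i => A.mulVec w i - μ * w i
  have hx : ∀ i : Fin n, (i : ℕ) < r → x i = 0 := fun i hi => by simp [x, hAw i hi]
  have hsq : ∀ i, A.mulVec w i ^ 2 = μ ^ 2 * w i ^ 2 + x i ^ 2 := by
    intro i
    rcases lt_or_ge (i : ℕ) r with hi | hi
    · rw [hx i hi, hAw i hi]; ring
    · simp [x, hw i hi]
  have hsplit : ∀ κ : Fin n → ℝ, ∑ i, κ i * A.mulVec w i ^ 2 =
      μ ^ 2 * ∑ i, κ i * w i ^ 2 + ∑ i, κ i * x i ^ 2 := by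
    intro κ
    rw [Finset.mul_sum, ← Finset.sum_add_distrib]
    exact Finset.sum_congr rfl fun i _ => by rw [hsq]; ring
  obtain ⟨i₀, hi₀⟩ := Function.ne_iff.1 hw0
  have hi₀r : (i₀ : ℕ) < r := by
    by_contra! h
    exact hi₀ (hw i₀ h)
  have hi₀pos : 0 < w i₀ ^ 2 := by
    have : w i₀ ≠ 0 := hi₀
    positivity
  have hobs := stein_sum_sq hc w
  rw [hsplit] at hobs
  have hW : 0 < ∑ i, σ i * w i ^ 2 :=
    Finset.sum_pos' (fun i _ => mul_nonneg (hσ i).le (sq_nonneg _))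
      ⟨i₀, Finset.mem_univ _, mul_pos (hσ i₀) hi₀pos⟩
  have hX : 0 ≤ ∑ i, σ i * x i ^ 2 :=
    Finset.sum_nonneg fun i _ => mul_nonneg (hσ i).le (sq_nonneg _)
  have hμ : μ ^ 2 < 1 := by
    by_contra! h
    have hX0 : ∑ i, σ i * x i ^ 2 = 0 := by
      nlinarith [sq_nonneg (c ⬝ᵥ w), mul_nonneg (sub_nonneg.2 h) hW.le]
    have hx0 : ∀ i, x i = 0 := by
      intro i
      have := (Finset.sum_eq_zero_iff_of_nonneg
        (fun i _ => mul_nonneg (hσ i).le (sq_nonneg _))).1 hX0 i (Finset.mem_univ _)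
      simpa [(hσ i).ne'] using this
    have hAw' : A.mulVec w = μ • w := by
      ext i
      have := hx0 i
      simp only [x, sub_eq_zero] at this
      simpa using this
    have hpow : ∀ t : ℕ, (A ^ t).mulVec w = μ ^ t • w := by
      intro t
      induction t with
      | zero => simp
      | succ t ih => rw [pow_succ, ← Matrix.mulVec_mulVec, hAw', Matrix.mulVec_smul, ih,
          smul_smul, pow_succ, mul_comm]
    have hlim : Filter.Tendsto (fun t => (A ^ t).mulVec w i₀) Filter.atTop (nhds 0) := by
      have : Filter.Tendsto (fun t => ∑ j, (A ^ t) i₀ j * w j) Filter.atTop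
          (nhds (∑ j, 0 * w j)) := tendsto_finsetSum _ fun j _ => (hA i₀ j).mul_const _
      simpa [Matrix.mulVec, dotProduct] using this
    have hlim2 := hlim.pow 2
    have : w i₀ ^ 2 ≤ 0 ^ 2 := by
      refine ge_of_tendsto hlim2 (Filter.Eventually.of_forall fun t => ?_)
      rw [hpow, Pi.smul_apply, smul_eq_mul, mul_pow, ← pow_mul, mul_comm t 2, pow_mul]
      exact le_mul_of_one_le_left hi₀pos.le (one_le_pow₀ h)
    linarith
  refine ⟨hμ, fun hcw => ?_⟩
  have hAs := stein_mulVec hc w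
  rw [hcw, zero_smul, sub_zero] at hAs
  have hctr := stein_sum_sq (A := Aᵀ) (by simpa using hb)
    ((Matrix.diagonal σ).mulVec (A.mulVec w))
  rw [hAs] at hctr
  have e1 : ∀ v : Fin n → ℝ, ∑ i, σ i * (Matrix.diagonal σ).mulVec v i ^ 2 =
      ∑ i, σ i ^ 3 * v i ^ 2 := fun v =>
    Finset.sum_congr rfl fun i _ => by rw [Matrix.mulVec_diagonal]; ring
  rw [e1, e1, hsplit] at hctr
  have h1 : ∑ i, σ i ^ 3 * x i ^ 2 ≤ τ ^ 2 * ∑ i, σ i * x i ^ 2 := by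
    rw [Finset.mul_sum]
    refine Finset.sum_le_sum fun i _ => ?_
    rcases lt_or_ge (i : ℕ) r with hi | hi
    · simp [hx i hi]
    · have : σ i ^ 2 ≤ τ ^ 2 := pow_le_pow_left₀ (hσ i).le (hle i hi) 2
      nlinarith [mul_le_mul_of_nonneg_right this (mul_nonneg (hσ i).le (sq_nonneg (x i)))]
  have hterm : ∀ i : Fin n, (i : ℕ) < r → τ ^ 2 < σ i ^ 2 := fun i hi =>
    pow_lt_pow_left₀ (hlt i hi) hτ.le two_ne_zero
  have h2 : τ ^ 2 * ∑ i, σ i * w i ^ 2 < ∑ i, σ i ^ 3 * w i ^ 2 := by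
    rw [Finset.mul_sum]
    refine Finset.sum_lt_sum (fun i _ => ?_) ⟨i₀, Finset.mem_univ _, ?_⟩
    · rcases lt_or_ge (i : ℕ) r with hi | hi
      · nlinarith [mul_le_mul_of_nonneg_right (hterm i hi).le
          (mul_nonneg (hσ i).le (sq_nonneg (w i)))]
      · simp [hw i hi]
    · nlinarith [mul_lt_mul_of_pos_right (hterm i₀ hi₀r) (mul_pos (hσ i₀) hi₀pos)]
  rw [hcw] at hobs
  nlinarith [mul_lt_mul_of_pos_left h2 (sub_pos.2 hμ),
    sq_nonneg (b ⬝ᵥ (Matrix.diagonal σ).mulVec (A.mulVec w))]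

/-- A response `β ⬝ᵥ M ^ t *ᵥ β` with `M` positive definite and all eigenvectors observable and
contractive is a sum of `r` distinct decaying exponentials with positive weights. -/
theorem exists_exponential_sum_of_posDef {r : ℕ} {M : Matrix (Fin r) (Fin r) ℝ} {β : Fin r → ℝ}
    (hM : M.PosDef)
    (hobs : ∀ (μ : ℝ) (v : Fin r → ℝ), v ≠ 0 → M.mulVec v = μ • v → μ ^ 2 < 1 ∧ β ⬝ᵥ v ≠ 0) :
    ∃ ρ μ : Fin r → ℝ, (∀ i, 0 < ρ i) ∧ StrictAnti μ ∧ (∀ i, 0 < μ i ∧ μ i < 1) ∧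
      ∀ t : ℕ, β ⬝ᵥ (M ^ t).mulVec β = ∑ i, ρ i * μ i ^ t := by
  have hH := hM.isHermitian
  let e : Fin r → Fin r → ℝ := fun i => (hH.eigenvectorBasis i).ofLp
  let lam := hH.eigenvalues
  have he : ∀ i, M.mulVec (e i) = lam i • e i := fun i => hH.mulVec_eigenvectorBasis i
  have hind : ∀ i, e i ≠ 0 := fun i h =>
    hH.eigenvectorBasis.orthonormal.ne_zero i (by ext j; exact congr_fun h j)
  have hlam0 : ∀ i, 0 < lam i := fun i => hM.eigenvalues_pos i
  have hlam1 : ∀ i, lam i < 1 := fun i => by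
    nlinarith [(hobs _ _ (hind i) (he i)).1, hlam0 i]
  have hβ : ∀ i, β ⬝ᵥ e i ≠ 0 := fun i => (hobs _ _ (hind i) (he i)).2
  have hinj : Function.Injective lam := by
    intro i j hij
    by_contra hne
    let v : Fin r → ℝ := (β ⬝ᵥ e j) • e i - (β ⬝ᵥ e i) • e j
    have hv0 : v ≠ 0 := by
      intro hv
      have hv' : (β ⬝ᵥ e j) • hH.eigenvectorBasis i - (β ⬝ᵥ e i) • hH.eigenvectorBasis j = 0 :=
        congr_arg (WithLp.toLp 2) hv
      have h := congr_arg (fun u => inner ℝ (hH.eigenvectorBasis i) u) hv'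
      simp only [inner_sub_right, inner_smul_right, inner_zero_right,
        hH.eigenvectorBasis.inner_eq_ite, if_neg hne] at h
      exact hβ j (by simpa using h)
    refine (hobs (lam i) v hv0 ?_).2 ?_
    · simp only [v, Matrix.mulVec_sub, Matrix.mulVec_smul, he, ← hij, smul_sub, smul_smul,
        mul_comm]
    · simp only [v, dotProduct_sub, dotProduct_smul, smul_eq_mul]
      ring
  have hpow : ∀ (t : ℕ) i, (M ^ t).mulVec (e i) = lam i ^ t • e i := by
    intro t i
    induction t with
    | zero => simp
    | succ t ih => rw [pow_succ, ← Matrix.mulVec_mulVec, he, Matrix.mulVec_smul, ih,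
        smul_smul, pow_succ, mul_comm]
  have hexp : β = ∑ i, (β ⬝ᵥ e i) • e i := by
    have h := hH.eigenvectorBasis.sum_repr' (WithLp.toLp 2 β)
    have h2 := congr_arg WithLp.ofLp h
    simp only [WithLp.ofLp_sum, WithLp.ofLp_smul] at h2
    conv_lhs => rw [← h2]
    refine Finset.sum_congr rfl fun i _ => ?_
    congr 1
  have hsum : ∀ t : ℕ, β ⬝ᵥ (M ^ t).mulVec β = ∑ i, (β ⬝ᵥ e i) ^ 2 * lam i ^ t := by
    intro t
    have h1 : (M ^ t).mulVec β = ∑ i, (β ⬝ᵥ e i) • (lam i ^ t • e i) := by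
      conv_lhs => rw [hexp]
      rw [Matrix.mulVec_sum]
      exact Finset.sum_congr rfl fun i _ => by rw [Matrix.mulVec_smul, hpow]
    rw [h1, dotProduct_sum]
    refine Finset.sum_congr rfl fun i _ => ?_
    simp only [dotProduct_smul, smul_eq_mul]
    ring
  obtain ⟨π, hπ⟩ := exists_perm_strictMono (J := fun i => -lam i)
    (fun i j h => hinj (neg_injective h))
  refine ⟨fun i => (β ⬝ᵥ e (π i)) ^ 2, fun i => lam (π i), fun i => ?_, fun i j hij => ?_,
    fun i => ⟨hlam0 _, hlam1 _⟩, fun t => ?_⟩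
  · exact sq_pos_of_ne_zero (hβ _)
  · exact neg_lt_neg_iff.1 (hπ hij)
  · rw [hsum]
    exact (Equiv.sum_comp π fun i => (β ⬝ᵥ e i) ^ 2 * lam i ^ t).symm

/-- The Hankel singular value decomposition carried by a balanced realization. -/
theorem isHankelSVD_of_isBalancedRealization {n : ℕ} {A : Matrix (Fin n) (Fin n) ℝ}
    {b c σ : Fin n → ℝ} (h : IsBalancedRealization A b c σ) :
    IsHankelSVD (fun t => c ⬝ᵥ (A ^ t).mulVec b)
      (fun i t => Matrix.vecMul c (A ^ t) i / √(σ i)) (fun i t => (A ^ t).mulVec b i / √(σ i))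
      σ := by
  obtain ⟨hA, -, -, hanti, hpos, hb, hc⟩ := h
  have hlim := tendsto_pow_apply_zero_of_schur A hA
  have hsq : ∀ i, √(σ i) * √(σ i) = σ i := fun i => Real.mul_self_sqrt (hpos i).le
  have hs0 : ∀ i, √(σ i) ≠ 0 := fun i => (Real.sqrt_pos.2 (hpos i)).ne'
  have hdiag : ∀ i j, Matrix.diagonal σ i j / (√(σ i) * √(σ j)) = if i = j then 1 else 0 := by
    intro i j
    split_ifs with hij
    · subst hij
      rw [hsq, Matrix.diagonal_apply_eq, div_self (hpos i).ne']
    · rw [Matrix.diagonal_apply_ne _ hij, zero_div]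
  have hctr : ∀ i j, HasSum (fun t => (A ^ t).mulVec b i * (A ^ t).mulVec b j)
      (Matrix.diagonal σ i j) := by
    have := hasSum_observabilityGramian (A := Aᵀ) (D := Matrix.diagonal σ) (c := b)
      (by simpa using hb) fun i j => by
        simpa only [← Matrix.transpose_pow, Matrix.transpose_apply] using hlim j i
    simpa only [← Matrix.transpose_pow, Matrix.vecMul_transpose] using this
  refine ⟨fun i j => ?_, fun i j => ?_, fun t s => ?_, hpos, hanti⟩
  · rw [← hdiag]
    simpa only [div_mul_div_comm] using
      (hasSum_observabilityGramian hc hlim i j).div_const (√(σ i) * √(σ j))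
  · rw [← hdiag]
    simpa only [div_mul_div_comm] using (hctr i j).div_const (√(σ i) * √(σ j))
  · rw [pow_add, ← Matrix.mulVec_mulVec, Matrix.dotProduct_mulVec]
    refine Finset.sum_congr rfl fun i _ => ?_
    rw [mul_assoc, div_mul_div_comm, hsq, mul_div_cancel₀ _ (hpos i).ne']

/-- The compression of the shift to the left singular vectors is a scaling of `A`. -/
theorem hasSum_shift_observability {n : ℕ} {A : Matrix (Fin n) (Fin n) ℝ} {c σ : Fin n → ℝ}
    (h : Aᵀ * Matrix.diagonal σ * A - Matrix.diagonal σ + Matrix.vecMulVec c c = 0)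
    (hA : ∀ i j, Filter.Tendsto (fun t => (A ^ t) i j) Filter.atTop (nhds 0)) (i j : Fin n) :
    HasSum (fun t => Matrix.vecMul c (A ^ t) i * Matrix.vecMul c (A ^ (t + 1)) j)
      (σ i * A i j) := by
  have h1 := hasSum_sum fun l (_ : l ∈ Finset.univ) =>
    (hasSum_observabilityGramian h hA i l).mul_right (A l j)
  have h2 : ∀ t, Matrix.vecMul c (A ^ t) i * Matrix.vecMul c (A ^ (t + 1)) j =
      ∑ l, Matrix.vecMul c (A ^ t) i * Matrix.vecMul c (A ^ t) l * A l j := by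
    intro t
    rw [pow_succ, ← Matrix.vecMul_vecMul]
    generalize Matrix.vecMul c (A ^ t) = u
    simp only [Matrix.vecMul, dotProduct, Finset.mul_sum, mul_assoc]
  have h3 : σ i * A i j = ∑ l, Matrix.diagonal σ i l * A l j := by
    simp [Matrix.diagonal_apply]
  simpa only [h2, h3] using h1

theorem sum_castLE_eq {n r : ℕ} (hrn : r ≤ n) (f : Fin n → ℝ)
    (hf : ∀ i : Fin n, r ≤ (i : ℕ) → f i = 0) : ∑ i : Fin r, f (Fin.castLE hrn i) = ∑ i, f i := by
  refine Fintype.sum_of_injective (Fin.castLE hrn) (Fin.castLE_injective hrn) _ _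
    (fun i hi => hf i ?_) fun _ => rfl
  by_contra! h
  exact hi ⟨⟨i, h⟩, rfl⟩

/-- For a balanced realization with strictly `k`-positive Hankel matrix, the truncations of `b` and
`c` agree, and the truncation of `A` is positive definite. -/
theorem balanced_truncation_symmetric_posDef {n : ℕ} {A : Matrix (Fin n) (Fin n) ℝ}
    {b c σ : Fin n → ℝ} (hbal : IsBalancedRealization A b c σ) {k : ℕ} (hkn : k ≤ n)
    (hkpos : HankelStrictlyKPositive (fun t => c ⬝ᵥ (A ^ t).mulVec b) k)
    {r : ℕ} (hrk : r < k) (hrn : r ≤ n) :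
    b ∘ Fin.castLE hrn = c ∘ Fin.castLE hrn ∧
      (A.submatrix (Fin.castLE hrn) (Fin.castLE hrn)).PosDef := by
  have hs := isHankelSVD_of_isBalancedRealization hbal
  obtain ⟨hA, -, -, -, hpos, hb, hc⟩ := hbal
  have hlim := tendsto_pow_apply_zero_of_schur A hA
  have hs0 : ∀ i, 0 < √(σ i) := fun i => Real.sqrt_pos.2 (hpos i)
  have hsq : ∀ i, √(σ i) * √(σ i) = σ i := fun i => Real.mul_self_sqrt (hpos i).le
  have heq : ∀ (i : Fin r) t, Matrix.vecMul c (A ^ t) (Fin.castLE hrn i) =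
      (A ^ t).mulVec b (Fin.castLE hrn i) := by
    intro i t
    have h := congr_fun (hs.left_eq_right hkpos hkn (a := Fin.castLE hrn i)
      (by simp only [Fin.val_castLE]; omega)) t
    exact (div_left_inj' (hs0 _).ne').1 h
  refine ⟨funext fun i => by simpa using (heq i 0).symm, ?_⟩
  refine posDef_of_leading_minors_pos _ (Matrix.ext fun i j => ?_) fun p hp => ?_
  · have h1 := hasSum_shift_observability hc hlim (Fin.castLE hrn i) (Fin.castLE hrn j)
    have h2 := hasSum_shift_observability (A := Aᵀ) (c := b) (σ := σ) (by simpa using hb)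
      (fun i j => by simpa only [← Matrix.transpose_pow, Matrix.transpose_apply] using hlim j i)
      (Fin.castLE hrn i) (Fin.castLE hrn j)
    simp only [← Matrix.transpose_pow, Matrix.vecMul_transpose, ← heq] at h2
    exact (mul_left_cancel₀ (hpos _).ne' (h1.unique h2)).symm
  · rcases Nat.eq_zero_or_pos p with rfl | hp1
    · simp
    have hpn : p ≤ n := hp.trans hrn
    let B : Matrix (Fin p) (Fin p) ℝ := A.submatrix (Fin.castLE hpn) (Fin.castLE hpn)
    change 0 < B.det
    have hN := hs.det_shift_compression_pos hkpos hp1 (by omega) hpn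
      (Matrix.diagonal (fun i => √(σ (Fin.castLE hpn i))) * B *
        Matrix.diagonal (fun i => (√(σ (Fin.castLE hpn i)))⁻¹)) fun i j => by
        have h := (hasSum_shift_observability hc hlim (Fin.castLE hpn i)
          (Fin.castLE hpn j)).div_const
            (√(σ (Fin.castLE hpn i)) * √(σ (Fin.castLE hpn j)))
        have hentry : (Matrix.diagonal (fun i => √(σ (Fin.castLE hpn i))) * B *
            Matrix.diagonal (fun i => (√(σ (Fin.castLE hpn i)))⁻¹)) i j =
            σ (Fin.castLE hpn i) * A (Fin.castLE hpn i) (Fin.castLE hpn j) /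
              (√(σ (Fin.castLE hpn i)) * √(σ (Fin.castLE hpn j))) := by
          rw [Matrix.mul_diagonal, Matrix.diagonal_mul, mul_div_mul_comm,
            Real.div_sqrt, ← div_eq_mul_inv, ← mul_div_assoc]
          rfl
        rw [hentry]
        simpa only [div_mul_div_comm] using h
    rw [Matrix.det_mul, Matrix.det_mul, Matrix.det_diagonal, Matrix.det_diagonal, mul_right_comm,
      ← Finset.prod_mul_distrib] at hN
    simpa [mul_inv_cancel₀ (hs0 _).ne'] using hN

/-- If `(A,b,c)` is a balanced realization of `g(t) = cA^{t-1}b` whose Hankel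
matrix is strictly `k`-positive with `2 ≤ k ≤ n`, then for every
`1 ≤ r ≤ k-1` the balanced truncation of order `r` has impulse response
`g_r(t) = ∑_{i=1}^r ρ_i μ_i^{t-1}` with `ρ_i > 0` and `1 > μ_1 > … > μ_r > 0`;
in particular `H(g_r)` is totally positive and `g_r(t) ≥ 0` for all `t`. -/
theorem balanced_truncation_of_strictly_kpositive
    {n : ℕ} (A : Matrix (Fin n) (Fin n) ℝ) (b c : Fin n → ℝ) (σ : Fin n → ℝ)
    (hbal : IsBalancedRealization A b c σ)
    (k : ℕ) (hk2 : 2 ≤ k) (hkn : k ≤ n)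
    (hkpos : HankelStrictlyKPositive (fun t => c ⬝ᵥ (A ^ t).mulVec b) k)
    (r : ℕ) (hr1 : 1 ≤ r) (hrk : r ≤ k - 1) (hrn : r ≤ n) :
    (∃ ρ μ : Fin r → ℝ, (∀ i, 0 < ρ i) ∧ StrictAnti μ ∧
      (∀ i, 0 < μ i ∧ μ i < 1) ∧
      ∀ t : ℕ, truncResponse A b c r hrn t = ∑ i, ρ i * μ i ^ t) ∧
    HankelTotallyPositive (truncResponse A b c r hrn) ∧
    (∀ t : ℕ, 0 ≤ truncResponse A b c r hrn t) := by
  have hs := isHankelSVD_of_isBalancedRealization hbal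
  obtain ⟨hbc, hM⟩ := balanced_truncation_symmetric_posDef hbal hkn hkpos (r := r) (by omega) hrn
  obtain ⟨hA, -, -, hanti, hpos, hb, hc⟩ := hbal
  have hlim := tendsto_pow_apply_zero_of_schur A hA
  have hrn' : r < n := by omega
  have hgap : ∀ i : Fin n, (i : ℕ) < r → σ ⟨r, hrn'⟩ < σ i := by
    intro i hi
    obtain ⟨q, rfl⟩ : ∃ q, r = q + 1 := ⟨r - 1, by omega⟩
    exact (hs.singularValue_lt hkpos (by omega) hrn').trans_le
      (hanti i ⟨q, by omega⟩ (by rw [Fin.le_def]; simp only; omega))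
  have hobs : ∀ (μ : ℝ) (v : Fin r → ℝ), v ≠ 0 →
      (A.submatrix (Fin.castLE hrn) (Fin.castLE hrn)).mulVec v = μ • v →
      μ ^ 2 < 1 ∧ (c ∘ Fin.castLE hrn) ⬝ᵥ v ≠ 0 := by
    intro μ v hv0 hv
    let w : Fin n → ℝ := fun i => if h : (i : ℕ) < r then v ⟨i, h⟩ else 0
    have hwv : ∀ i, w (Fin.castLE hrn i) = v i := fun i => by simp [w]
    have hw : ∀ i : Fin n, r ≤ (i : ℕ) → w i = 0 := fun i hi => by simp [w, hi]
    have hdot : ∀ f : Fin n → ℝ, (f ∘ Fin.castLE hrn) ⬝ᵥ v = f ⬝ᵥ w := by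
      intro f
      rw [dotProduct, dotProduct, ← sum_castLE_eq hrn _ fun i hi => by rw [hw i hi, mul_zero]]
      simp only [hwv, Function.comp_apply]
    rw [hdot]
    refine sq_lt_one_and_dotProduct_ne_zero hb hc hlim hpos (hpos _) hgap
      (fun i hi => hanti _ _ (by rw [Fin.le_def]; exact hi)) (fun h => hv0 ?_) hw fun i hi => ?_
    · ext i
      rw [← hwv, h]
      rfl
    · have h1 := congr_fun hv ⟨i, hi⟩
      have h2 := hdot (A i)
      have h3 := hwv ⟨i, hi⟩
      calc A.mulVec w i = (A i ∘ Fin.castLE hrn) ⬝ᵥ v := h2.symm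
        _ = μ * v ⟨i, hi⟩ := h1
        _ = μ * w i := by rw [← h3]; rfl
  obtain ⟨ρ, μ, hρ, hμ, hμ01, hg⟩ := exists_exponential_sum_of_posDef hM hobs
  have hg' : ∀ t : ℕ, truncResponse A b c r hrn t = ∑ i, ρ i * μ i ^ t := by
    intro t
    rw [← hg, truncResponse, hbc]
  refine ⟨⟨ρ, μ, hρ, hμ, hμ01, hg'⟩,
    hankelTotallyPositive_of_exponential_sum hρ (fun i => (hμ01 i).1) hg', fun t => ?_⟩
  rw [hg']
  exact Finset.sum_nonneg fun i _ => mul_nonneg (hρ i).le (pow_nonneg (hμ01 i).1.le t)
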